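/- There exists a countable infinite discrete group G with Kazhdan's property (T) such that H²(G ↷ 𝕋^G; 𝕋) ≠ H²(G, 𝕋); that is, the natural map Ψ₂ : H²(G, 𝕋) → H²(G ↷ 𝕋^G; 𝕋) is not surjective for the Bernoulli shift G ↷ (𝕋^G, ν^G), where ν is the Haar measure on 𝕋. Equivalently, there is a measurable 2-cocycle for this Bernoulli shift that is not cohomologous to any measurable 2-cocycle constant in the space variable. -/

import Mathlib

open MeasureTheory

noncomputable section

namespace AlgActCohomology

/-- The Borel σ-algebra on the circle group `𝕋 = {z ∈ ℂ : |z| = 1}`. -/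
noncomputable instance : MeasurableSpace Circle := borel Circle
instance : BorelSpace Circle := ⟨rfl⟩

variable {G X : Type*}

/-- The diagonal action on a product. -/
def diag (a : G → X → X) : G → X × X → X × X := fun g p => (a g p.1, a g p.2)

/-- An action is ergodic if every measurable set invariant under every group element
has measure 0 or 1. -/
def IsErgodicAction [MeasurableSpace X] (a : G → X → X) (μ : Measure X) : Prop :=
  ∀ s : Set X, MeasurableSet s → (∀ g : G, a g ⁻¹' s = s) → μ s = 0 ∨ μ s = 1

/-- An action is weakly mixing if the diagonal action on the square
(with the product measure) is ergodic. -/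
def IsWeaklyMixing [MeasurableSpace X] (a : G → X → X) (μ : Measure X) : Prop :=
  IsErgodicAction (diag a) (μ.prod μ)

/-- A (p.m.p.) group action: `a : G → X → X` is an action of `G` and every `a g`
is measure preserving. -/
structure IsPmpAction [Group G] [MeasurableSpace X] (a : G → X → X) (μ : Measure X) :
    Prop where
  act_one : ∀ x, a 1 x = x
  act_mul : ∀ g h x, a (g * h) x = a g (a h x)
  measurePreserving : ∀ g, MeasurePreserving (a g) μ μ

/-- An algebraic action: an action of `G` by continuous (automatically bijective)
additive automorphisms of a compact abelian group `X`. -/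
structure IsAlgebraicAction [Group G] [AddCommGroup X] [TopologicalSpace X]
    (a : G → X → X) : Prop where
  act_one : ∀ x, a 1 x = x
  act_mul : ∀ g h x, a (g * h) x = a g (a h x)
  continuous : ∀ g, Continuous (a g)
  act_add : ∀ g x y, a g (x + y) = a g x + a g y

/-- A measurable `𝕋`-valued 1-cocycle for an action. -/
def IsCocycle1 [Group G] [MeasurableSpace X] (a : G → X → X) (μ : Measure X)
    (c : G → X → Circle) : Prop :=
  (∀ g, Measurable (c g)) ∧ ∀ g h : G, ∀ᵐ x ∂μ, c (g * h) x = c g x * c h (a g⁻¹ x)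

/-- An action is `𝕋`-cocycle superrigid if every measurable `𝕋`-valued 1-cocycle is
cohomologous to a group homomorphism `G → 𝕋`. -/
def IsCocycleSuperrigid [Group G] [MeasurableSpace X] (a : G → X → X) (μ : Measure X) :
    Prop :=
  ∀ c : G → X → Circle, IsCocycle1 a μ c →
    ∃ (lam : G →* Circle) (b : X → Circle), Measurable b ∧
      ∀ g : G, ∀ᵐ x ∂μ, c g x = lam g * (b (a g⁻¹ x) * (b x)⁻¹)

section Char

variable (X) [AddCommGroup X] [TopologicalSpace X]

/-- The Pontryagin dual `X̂` of a compact abelian group `X`: the group of continuous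
characters `X → 𝕋`, as a subgroup of the group of all functions `X → 𝕋`. -/
def charGroup : Subgroup (X → Circle) where
  carrier := {χ | Continuous χ ∧ ∀ x y, χ (x + y) = χ x * χ y}
  one_mem' := ⟨continuous_const, fun _ _ => (one_mul 1).symm⟩
  mul_mem' := fun h1 h2 => ⟨h1.1.mul h2.1, fun x y => by
    simp only [Pi.mul_apply, h1.2 x y, h2.2 x y]; exact mul_mul_mul_comm _ _ _ _⟩
  inv_mem' := fun h => ⟨h.1.inv, fun x y => by
    simp only [Pi.inv_apply, h.2 x y, mul_inv]⟩

end Char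

section Degree1

variable [Group G] [AddCommGroup X] [TopologicalSpace X]

/-- `Z¹(G, X̂)`: 1-cocycles of `G` with coefficients in the dual module `X̂`,
where `(g • χ) x = χ (a g⁻¹ x)`. -/
def modZ1 (a : G → X → X) : Subgroup (G → charGroup X) where
  carrier := {c | ∀ (g h : G) (x : X),
    ((c (g * h) : X → Circle)) x = (c h : X → Circle) (a g⁻¹ x) * (c g : X → Circle) x}
  one_mem' := by
    intro g h x
    simp
  mul_mem' := by
    intro c₁ c₂ h1 h2 g h x
    simp only [Pi.mul_apply, Subgroup.coe_mul]
    rw [h1 g h x, h2 g h x]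
    ac_rfl
  inv_mem' := by
    intro c hc g h x
    simp only [Pi.inv_apply, InvMemClass.coe_inv]
    rw [hc g h x, mul_inv]

/-- `B¹(G, X̂)`: 1-coboundaries. -/
def modB1 (a : G → X → X) : Subgroup (G → charGroup X) where
  carrier := {c | ∃ χ : charGroup X, ∀ (g : G) (x : X),
    (c g : X → Circle) x = (χ : X → Circle) (a g⁻¹ x) * ((χ : X → Circle) x)⁻¹}
  one_mem' := ⟨1, by intro g x; simp⟩
  mul_mem' := by
    rintro c₁ c₂ ⟨χ₁, h1⟩ ⟨χ₂, h2⟩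
    refine ⟨χ₁ * χ₂, fun g x => ?_⟩
    simp only [Pi.mul_apply, Subgroup.coe_mul]
    rw [h1 g x, h2 g x, mul_inv]
    ac_rfl
  inv_mem' := by
    rintro c ⟨χ, h⟩
    refine ⟨χ⁻¹, fun g x => ?_⟩
    simp only [Pi.inv_apply, InvMemClass.coe_inv]
    rw [h g x, mul_inv, inv_inv]

variable [MeasurableSpace X]

/-- Measurable `𝕋`-valued 1-cocycles for an action, as a subgroup of all maps
`G → X → 𝕋`. -/
def measZ1 (a : G → X → X) (μ : Measure X) : Subgroup (G → X → Circle) where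
  carrier := {c | (∀ g, Measurable (c g)) ∧
    ∀ g h : G, ∀ᵐ x ∂μ, c (g * h) x = c g x * c h (a g⁻¹ x)}
  one_mem' := ⟨fun _ => measurable_const, fun g h => ae_of_all _ fun x => by simp⟩
  mul_mem' := by
    rintro c₁ c₂ ⟨m1, h1⟩ ⟨m2, h2⟩
    refine ⟨fun g => (m1 g).mul (m2 g), fun g h => ?_⟩
    filter_upwards [h1 g h, h2 g h] with x e1 e2
    simp only [Pi.mul_apply]
    rw [e1, e2]
    ac_rfl
  inv_mem' := by
    rintro c ⟨m, hc⟩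
    refine ⟨fun g => (m g).inv, fun g h => ?_⟩
    filter_upwards [hc g h] with x e
    simp only [Pi.inv_apply]
    rw [e, mul_inv]

/-- The subgroup of measurable 1-cocycles that are cohomologous to (the cocycle
induced by) a group homomorphism `G → 𝕋`; this is the preimage in `Z¹(G ↷ X; 𝕋)` of
the subgroup `Ψ₁(H¹(G, 𝕋))` of `H¹(G ↷ X; 𝕋)`, so that
`H¹(G ↷ X; 𝕋)/Ψ₁(H¹(G, 𝕋)) = measZ1 ⧸ measBPsi1`. -/
def measBPsi1 (a : G → X → X) (μ : Measure X) : Subgroup (G → X → Circle) where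
  carrier := {c | ∃ (φ : G →* Circle) (b : X → Circle), Measurable b ∧
    ∀ g : G, ∀ᵐ x ∂μ, c g x = φ g * (b (a g⁻¹ x) * (b x)⁻¹)}
  one_mem' := ⟨1, 1, measurable_const, fun g => ae_of_all _ fun x => by simp⟩
  mul_mem' := by
    rintro c₁ c₂ ⟨φ₁, b₁, hb₁, h1⟩ ⟨φ₂, b₂, hb₂, h2⟩
    refine ⟨φ₁ * φ₂, b₁ * b₂, hb₁.mul hb₂, fun g => ?_⟩
    filter_upwards [h1 g, h2 g] with x e1 e2
    simp only [Pi.mul_apply, MonoidHom.mul_apply]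
    rw [e1, e2, mul_inv]
    ac_rfl
  inv_mem' := by
    rintro c ⟨φ, b, hb, h⟩
    refine ⟨φ⁻¹, b⁻¹, hb.inv, fun g => ?_⟩
    filter_upwards [h g] with x e
    simp only [Pi.inv_apply, MonoidHom.inv_apply]
    rw [e, mul_inv, mul_inv, inv_inv]

/-- The measurable cocycle induced by a module cocycle: evaluation of characters. -/
def ind1 (c : G → charGroup X) : G → X → Circle := fun g => (c g : X → Circle)

end Degree1

section Degree2

variable [Group G]

/-- A `𝕋`-valued 2-cocycle of the group `G` (for the trivial `G`-module `𝕋`). -/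
def IsGrpCocycle2 (θ : G → G → Circle) : Prop :=
  ∀ g₁ g₂ g₃ : G, θ g₂ g₃ * (θ (g₁ * g₂) g₃)⁻¹ * θ g₁ (g₂ * g₃) * (θ g₁ g₂)⁻¹ = 1

private lemma mul4 {M : Type*} [CommGroup M] {a₁ b₁ c₁ d₁ a₂ b₂ c₂ d₂ : M}
    (h₁ : a₁ * b₁⁻¹ * c₁ * d₁⁻¹ = 1) (h₂ : a₂ * b₂⁻¹ * c₂ * d₂⁻¹ = 1) :
    (a₁ * a₂) * (b₁ * b₂)⁻¹ * (c₁ * c₂) * (d₁ * d₂)⁻¹ = 1 := by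
  have e : (a₁ * a₂) * (b₁ * b₂)⁻¹ * (c₁ * c₂) * (d₁ * d₂)⁻¹
      = (a₁ * b₁⁻¹ * c₁ * d₁⁻¹) * (a₂ * b₂⁻¹ * c₂ * d₂⁻¹) := by
    simp only [mul_inv]; ac_rfl
  rw [e, h₁, h₂, one_mul]

private lemma inv4 {M : Type*} [CommGroup M] {a b c d : M}
    (h : a * b⁻¹ * c * d⁻¹ = 1) : a⁻¹ * b * c⁻¹ * d = 1 := by
  have e : a⁻¹ * b * c⁻¹ * d = (a * b⁻¹ * c * d⁻¹)⁻¹ := by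
    simp only [mul_inv, inv_inv]; try ac_rfl
  rw [e, h, inv_one]

variable [AddCommGroup X] [TopologicalSpace X]

/-- `Z²(G, X̂)`: 2-cocycles of `G` with coefficients in the dual module `X̂`. -/
def modZ2 (a : G → X → X) : Subgroup (G → G → charGroup X) where
  carrier := {c | ∀ (g₁ g₂ g₃ : G) (x : X),
    (c g₂ g₃ : X → Circle) (a g₁⁻¹ x) * ((c (g₁ * g₂) g₃ : X → Circle) x)⁻¹ *
      (c g₁ (g₂ * g₃) : X → Circle) x * ((c g₁ g₂ : X → Circle) x)⁻¹ = 1}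
  one_mem' := by intro g₁ g₂ g₃ x; simp
  mul_mem' := by
    intro c₁ c₂ h1 h2 g₁ g₂ g₃ x
    simp only [Pi.mul_apply, Subgroup.coe_mul]
    exact mul4 (h1 g₁ g₂ g₃ x) (h2 g₁ g₂ g₃ x)
  inv_mem' := by
    intro c hc g₁ g₂ g₃ x
    simp only [Pi.inv_apply, InvMemClass.coe_inv, inv_inv]
    exact inv4 (hc g₁ g₂ g₃ x)

/-- `B²(G, X̂)`: 2-coboundaries. -/
def modB2 (a : G → X → X) : Subgroup (G → G → charGroup X) where
  carrier := {c | ∃ b : G → charGroup X, ∀ (g h : G) (x : X),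
    (c g h : X → Circle) x =
      (b h : X → Circle) (a g⁻¹ x) * ((b (g * h) : X → Circle) x)⁻¹ * (b g : X → Circle) x}
  one_mem' := ⟨1, by intro g h x; simp⟩
  mul_mem' := by
    rintro c₁ c₂ ⟨b₁, h1⟩ ⟨b₂, h2⟩
    refine ⟨b₁ * b₂, fun g h x => ?_⟩
    simp only [Pi.mul_apply, Subgroup.coe_mul]
    rw [h1 g h x, h2 g h x, mul_inv]
    try ac_rfl
  inv_mem' := by
    rintro c ⟨b, hb⟩
    refine ⟨b⁻¹, fun g h x => ?_⟩
    simp only [Pi.inv_apply, InvMemClass.coe_inv]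
    rw [hb g h x]
    simp only [mul_inv, inv_inv]
    try ac_rfl

variable [MeasurableSpace X]

/-- Measurable `𝕋`-valued 2-cocycles for an action. -/
def measZ2 (a : G → X → X) (μ : Measure X) : Subgroup (G → G → X → Circle) where
  carrier := {c | (∀ g h, Measurable (c g h)) ∧
    ∀ g₁ g₂ g₃ : G, ∀ᵐ x ∂μ,
      c g₂ g₃ (a g₁⁻¹ x) * (c (g₁ * g₂) g₃ x)⁻¹ * c g₁ (g₂ * g₃) x * (c g₁ g₂ x)⁻¹ = 1}
  one_mem' := ⟨fun _ _ => measurable_const, fun g₁ g₂ g₃ => ae_of_all _ fun x => by simp⟩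
  mul_mem' := by
    rintro c₁ c₂ ⟨m1, h1⟩ ⟨m2, h2⟩
    refine ⟨fun g h => (m1 g h).mul (m2 g h), fun g₁ g₂ g₃ => ?_⟩
    filter_upwards [h1 g₁ g₂ g₃, h2 g₁ g₂ g₃] with x e1 e2
    simp only [Pi.mul_apply]
    exact mul4 e1 e2
  inv_mem' := by
    rintro c ⟨m, hc⟩
    refine ⟨fun g h => (m g h).inv, fun g₁ g₂ g₃ => ?_⟩
    filter_upwards [hc g₁ g₂ g₃] with x e
    simp only [Pi.inv_apply, inv_inv]
    exact inv4 e

/-- The subgroup of measurable 2-cocycles that are cohomologous to a constant (in the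
space variable) 2-cocycle coming from a group 2-cocycle `θ : G² → 𝕋`; this is the
preimage in `Z²(G ↷ X; 𝕋)` of the subgroup `Ψ₂(H²(G, 𝕋))` of `H²(G ↷ X; 𝕋)`, so that
`H²(G ↷ X; 𝕋)/Ψ₂(H²(G, 𝕋)) = measZ2 ⧸ measBPsi2`. -/
def measBPsi2 (a : G → X → X) (μ : Measure X) : Subgroup (G → G → X → Circle) where
  carrier := {c | ∃ (θ : G → G → Circle) (b : G → X → Circle), IsGrpCocycle2 θ ∧
    (∀ g, Measurable (b g)) ∧
    ∀ g h : G, ∀ᵐ x ∂μ, c g h x = θ g h * (b h (a g⁻¹ x) * (b (g * h) x)⁻¹ * b g x)}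
  one_mem' := ⟨fun _ _ => 1, fun _ => 1, fun g₁ g₂ g₃ => by simp, fun _ => measurable_const,
    fun g h => ae_of_all _ fun x => by simp⟩
  mul_mem' := by
    rintro c₁ c₂ ⟨θ₁, b₁, hθ₁, hb₁, h1⟩ ⟨θ₂, b₂, hθ₂, hb₂, h2⟩
    refine ⟨fun g h => θ₁ g h * θ₂ g h, fun g => b₁ g * b₂ g,
      fun g₁ g₂ g₃ => mul4 (hθ₁ g₁ g₂ g₃) (hθ₂ g₁ g₂ g₃),
      fun g => (hb₁ g).mul (hb₂ g), fun g h => ?_⟩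
    filter_upwards [h1 g h, h2 g h] with x e1 e2
    simp only [Pi.mul_apply]
    rw [e1, e2]
    simp only [mul_inv]
    ac_rfl
  inv_mem' := by
    rintro c ⟨θ, b, hθ, hb, hc⟩
    refine ⟨fun g h => (θ g h)⁻¹, fun g => (b g)⁻¹,
      fun g₁ g₂ g₃ => by simpa only [inv_inv] using inv4 (hθ g₁ g₂ g₃),
      fun g => (hb g).inv, fun g h => ?_⟩
    filter_upwards [hc g h] with x e
    simp only [Pi.inv_apply]
    rw [e]
    simp only [mul_inv, inv_inv]
    try ac_rfl

/-- The measurable 2-cocycle induced by a module 2-cocycle: evaluation of characters. -/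
def ind2 (c : G → G → charGroup X) : G → G → X → Circle := fun g h => (c g h : X → Circle)

end Degree2

section Bernoulli

/-- The Bernoulli shift action `G ↷ X₀^G`, `(g • x) h = x (g⁻¹ h)`. -/
def bernoulliShift (G X₀ : Type*) [Group G] : G → (G → X₀) → (G → X₀) :=
  fun g x h => x (g⁻¹ * h)

/-- `μ` is the product along `ι` of copies of `μ₀`: it gives every finite-dimensional
cylinder set its product measure.  (This characterizes the Bernoulli product measure
`μ₀^ι` uniquely.) -/
def IsBernoulliMeasure {ι X₀ : Type*} [MeasurableSpace X₀] (μ₀ : Measure X₀)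
    (μ : Measure (ι → X₀)) : Prop :=
  ∀ (s : Finset ι) (t : ι → Set X₀), (∀ i, MeasurableSet (t i)) →
    μ {x | ∀ i ∈ s, x i ∈ t i} = ∏ i ∈ s, μ₀ (t i)

/-- The class `𝒢` of countable groups `G` such that for every standard probability
space `(X₀, μ₀)` the Bernoulli shift `G ↷ (X₀^G, μ₀^G)` is `𝕋`-cocycle superrigid. -/
def InClassG (G : Type*) [Group G] : Prop :=
  ∀ (X₀ : Type) [MeasurableSpace X₀] [StandardBorelSpace X₀]
    (μ₀ : Measure X₀) [IsProbabilityMeasure μ₀]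
    (μ : Measure (G → X₀)) [IsProbabilityMeasure μ],
    IsBernoulliMeasure μ₀ μ → IsCocycleSuperrigid (bernoulliShift G X₀) μ

end Bernoulli


/-- Kazhdan's property (T): every unitary representation of `G` on a complex Hilbert
space with almost invariant vectors has a nonzero invariant vector. -/
def HasPropertyT (G : Type*) [Group G] : Prop :=
  ∀ (H : Type) [NormedAddCommGroup H] [InnerProductSpace ℂ H] [CompleteSpace H]
    (π : G →* (H ≃ₗᵢ[ℂ] H)),
    (∀ (F : Finset G) (ε : ℝ), 0 < ε →
      ∃ ξ : H, ‖ξ‖ = 1 ∧ ∀ g ∈ F, ‖π g ξ - ξ‖ < ε) →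
    ∃ ξ : H, ξ ≠ 0 ∧ ∀ g : G, π g ξ = ξ

section LemmaQ
open scoped commutatorElement

/-- Two elements of order dividing `p` generating a Heisenberg-type group. -/
structure HeisRel {Γ : Type*} [Group Γ] (p : ℕ) (x y : Γ) : Prop where
  xp : x ^ p = 1
  yp : y ^ p = 1
  cx : Commute x ⁅x, y⁆
  cy : Commute y ⁅x, y⁆

namespace HeisRel

variable {Γ : Type*} [Group Γ] {p : ℕ} {x y : Γ}

theorem symm (h : HeisRel p x y) : HeisRel p y x := by
  refine ⟨h.yp, h.xp, ?_, ?_⟩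
  · rw [← commutatorElement_inv]; exact h.cy.inv_right
  · rw [← commutatorElement_inv]; exact h.cx.inv_right

theorem map {Γ' : Type*} [Group Γ'] (f : Γ →* Γ') (h : HeisRel p x y) :
    HeisRel p (f x) (f y) := by
  refine ⟨by rw [← map_pow, h.xp, map_one], by rw [← map_pow, h.yp, map_one], ?_, ?_⟩
  · rw [← map_commutatorElement]; exact h.cx.map f
  · rw [← map_commutatorElement]; exact h.cy.map f

theorem mul_comm_z (x y : Γ) : x * y = ⁅x, y⁆ * y * x := by
  simp [commutatorElement_def]

theorem pow_mul_one (h : HeisRel p x y) (i : ℕ) : x ^ i * y = ⁅x, y⁆ ^ i * y * x ^ i := by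
  induction i with
  | zero => simp
  | succ n ih =>
    have hc : Commute x (⁅x, y⁆ ^ n) := h.cx.pow_right n
    calc x ^ (n+1) * y = x * (x ^ n * y) := by rw [pow_succ']; group
      _ = x * ⁅x, y⁆ ^ n * y * x ^ n := by rw [ih]; group
      _ = ⁅x, y⁆ ^ n * (x * y) * x ^ n := by rw [hc.eq]; group
      _ = ⁅x, y⁆ ^ n * (⁅x, y⁆ * y * x) * x ^ n := by rw [← mul_comm_z x y]
      _ = ⁅x, y⁆ ^ (n+1) * y * x ^ (n+1) := by rw [pow_succ, pow_succ' x]; simp only [mul_assoc]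

theorem pow_mul_pow (h : HeisRel p x y) (i j : ℕ) :
    x ^ i * y ^ j = ⁅x, y⁆ ^ (i * j) * y ^ j * x ^ i := by
  induction j with
  | zero => simp
  | succ n ih =>
    have hc : Commute y (⁅x, y⁆ ^ i) := h.cy.pow_right i
    have hc2 : Commute (y ^ n) (⁅x, y⁆ ^ i) := hc.pow_left n
    calc x ^ i * y ^ (n+1) = (x ^ i * y ^ n) * y := by rw [pow_succ]; group
      _ = ⁅x, y⁆ ^ (i * n) * y ^ n * (x ^ i * y) := by rw [ih]; group
      _ = ⁅x, y⁆ ^ (i * n) * (y ^ n * ⁅x, y⁆ ^ i) * y * x ^ i := by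
        rw [h.pow_mul_one]; simp only [mul_assoc]
      _ = _ := by rw [hc2.eq, mul_add, mul_one, pow_add, pow_succ]; simp only [mul_assoc]

theorem zp (h : HeisRel p x y) : ⁅x, y⁆ ^ p = 1 := by
  have := h.pow_mul_one p
  rw [h.xp] at this
  simpa using this

end HeisRel

section Avg
variable {Γ A : Type*} [Group Γ] [Ring A] [Algebra ℂ A]

/-- Averaging element. -/
def avg (p : ℕ) (φ : Γ →* A) (x : Γ) : A := (p : ℂ)⁻¹ • ∑ i ∈ Finset.range p, φ (x ^ i)

variable {p : ℕ} (φ : Γ →* A) {x y : Γ}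

theorem mul_avg (hx : x ^ p = 1) : φ x * avg p φ x = avg p φ x := by
  unfold avg
  rw [mul_smul_comm, Finset.mul_sum]
  congr 1
  have h1 := Finset.sum_range_succ (fun i => φ (x ^ i)) p
  have h2 := Finset.sum_range_succ' (fun i => φ (x ^ i)) p
  rw [hx] at h1
  rw [h1] at h2
  simp only [pow_zero] at h2
  have h3 := add_right_cancel h2
  rw [h3]
  refine Finset.sum_congr rfl fun i _ => ?_
  rw [pow_succ', map_mul]

theorem pow_mul_avg (hx : x ^ p = 1) (n : ℕ) : φ (x ^ n) * avg p φ x = avg p φ x := by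
  induction n with
  | zero => simp
  | succ n ih => rw [pow_succ, map_mul, mul_assoc, mul_avg φ hx, ih]

theorem inv_mul_avg (hx : x ^ p = 1) : φ x⁻¹ * avg p φ x = avg p φ x := by
  conv_lhs => rw [← mul_avg φ hx]
  rw [← mul_assoc, ← map_mul]; simp

theorem comm_avg {a : A} (h : Commute a (φ x)) : Commute a (avg p φ x) := by
  unfold avg
  refine Commute.smul_right ?_ _
  refine Commute.sum_right _ _ _ fun i _ => ?_
  rw [map_pow]; exact h.pow_right i

theorem avg_mul (hx : x ^ p = 1) : avg p φ x * φ x = avg p φ x := by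
  rw [← (comm_avg φ (Commute.refl (φ x))).eq, mul_avg φ hx]

theorem avg_mul_of (hp : p ≠ 0) {T : A} (h : φ x * T = T) : avg p φ x * T = T := by
  unfold avg
  have h' : ∀ n : ℕ, φ (x ^ n) * T = T := by
    intro n
    induction n with
    | zero => simp
    | succ n ih => rw [pow_succ, map_mul, mul_assoc, h, ih]
  rw [smul_mul_assoc, Finset.sum_mul]
  simp only [h', Finset.sum_const, Finset.card_range]
  rw [← Nat.cast_smul_eq_nsmul ℂ, smul_smul, inv_mul_cancel₀ (by exact_mod_cast hp), one_smul]

theorem avg_idem (hp : p ≠ 0) (hx : x ^ p = 1) : avg p φ x * avg p φ x = avg p φ x :=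
  avg_mul_of φ hp (mul_avg φ hx)

theorem heis_comm_avg (hp : p ≠ 0) (h : HeisRel p x y) :
    avg p φ x * avg p φ y * avg p φ ⁅x, y⁆ = avg p φ y * avg p φ x * avg p φ ⁅x, y⁆ := by
  set E := avg p φ ⁅x, y⁆ with hE
  have key : ∀ i j : ℕ, φ (x ^ i) * φ (y ^ j) * E = φ (y ^ j) * φ (x ^ i) * E := by
    intro i j
    have hz : Commute (φ (⁅x, y⁆ ^ (i * j))) (φ (y ^ j * x ^ i)) := by
      refine Commute.map ?_ φ
      exact ((h.cy.pow_left j).mul_left (h.cx.pow_left i)).symm.pow_left _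
    rw [← map_mul, h.pow_mul_pow, mul_assoc, map_mul, hz.eq, mul_assoc,
      pow_mul_avg φ h.zp, map_mul]
  have e1 : avg p φ x * avg p φ y * E = (p : ℂ)⁻¹ • (p : ℂ)⁻¹ •
      ∑ i ∈ Finset.range p, ∑ j ∈ Finset.range p, φ (x ^ i) * φ (y ^ j) * E := by
    rw [avg, avg, smul_mul_assoc, mul_smul_comm, smul_mul_assoc, smul_mul_assoc,
      Finset.sum_mul_sum, Finset.sum_mul]
    simp only [Finset.sum_mul]
  have e2 : avg p φ y * avg p φ x * E = (p : ℂ)⁻¹ • (p : ℂ)⁻¹ •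
      ∑ j ∈ Finset.range p, ∑ i ∈ Finset.range p, φ (y ^ j) * φ (x ^ i) * E := by
    rw [avg, avg, smul_mul_assoc, mul_smul_comm, smul_mul_assoc, smul_mul_assoc,
      Finset.sum_mul_sum, Finset.sum_mul]
    simp only [Finset.sum_mul]
  rw [e1, e2, Finset.sum_comm]
  simp only [key]

theorem heis_compress (hp : p.Prime) (h : HeisRel p x y) :
    avg p φ y * avg p φ x * avg p φ y * (1 - avg p φ ⁅x, y⁆)
      = (p : ℂ)⁻¹ • (avg p φ y * (1 - avg p φ ⁅x, y⁆)) := by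
  set R := avg p φ y with hR
  have hRi : R * R = R := avg_idem φ hp.ne_zero h.yp
  have cE : ∀ {a : A}, Commute a (φ ⁅x, y⁆) → Commute a (avg p φ ⁅x, y⁆) := comm_avg φ
  have key : ∀ i ∈ Finset.range p, i ≠ 0 → R * φ (x ^ i) * R * (1 - avg p φ ⁅x, y⁆) = 0 := by
    intro i hi hi0
    set T := R * φ (x ^ i) * R with hT
    have hzR : Commute (φ (⁅x, y⁆ ^ i)) R := by
      refine comm_avg φ (Commute.map ?_ φ)
      exact (h.cy.pow_right i).symm
    have t1 : φ (⁅x, y⁆ ^ i) * T = T := by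
      calc φ (⁅x, y⁆ ^ i) * T = (φ (⁅x, y⁆ ^ i) * R) * φ (x ^ i) * R := by
            rw [hT]; simp only [mul_assoc]
        _ = (R * φ (⁅x, y⁆ ^ i)) * φ (x ^ i) * R := by rw [hzR.eq]
        _ = ((R * φ y) * φ (⁅x, y⁆ ^ i)) * φ (x ^ i) * R := by rw [avg_mul φ h.yp]
        _ = R * φ (⁅x, y⁆ ^ i * y * x ^ i) * R := by
            have : ⁅x, y⁆ ^ i * y = y * ⁅x, y⁆ ^ i := (h.cy.pow_right i).symm.eq
            rw [this, map_mul, map_mul]; simp only [mul_assoc]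
        _ = R * φ (x ^ i * y) * R := by rw [h.pow_mul_one]
        _ = R * φ (x ^ i) * (φ y * R) := by rw [map_mul]; simp only [mul_assoc]
        _ = T := by rw [mul_avg φ h.yp]
    have t1' : ∀ n : ℕ, φ ((⁅x, y⁆ ^ i) ^ n) * T = T := by
      intro n
      induction n with
      | zero => simp
      | succ n ih => rw [pow_succ, map_mul, mul_assoc, t1, ih]
    have t2 : φ ⁅x, y⁆ * T = T := by
      have hco : Nat.Coprime i p := by
        refine Nat.Coprime.symm ((Nat.Prime.coprime_iff_not_dvd hp).2 ?_)
        intro hd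
        have := Nat.le_of_dvd (Nat.pos_of_ne_zero hi0) hd
        have := Finset.mem_range.1 hi
        omega
      obtain ⟨n, hn⟩ := exists_pow_eq_self_of_coprime
        (x := ⁅x, y⁆) (n := i) (by
          exact Nat.Coprime.coprime_dvd_right (orderOf_dvd_of_pow_eq_one h.zp) hco)
      have := t1' n
      rwa [hn] at this
    have t3 := avg_mul_of φ hp.ne_zero t2
    have ct : Commute T (avg p φ ⁅x, y⁆) := by
      refine cE ?_
      have c1 : Commute R (φ ⁅x, y⁆) := (comm_avg φ (h.cy.symm.map φ)).symm
      have c2 : Commute (φ (x ^ i)) (φ ⁅x, y⁆) := (h.cx.pow_left i).map φ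
      exact (c1.mul_left c2).mul_left c1
    rw [mul_sub, mul_one, ct.eq, t3, sub_self]
  have e1 : R * avg p φ x * R * (1 - avg p φ ⁅x, y⁆) = (p : ℂ)⁻¹ •
      ∑ i ∈ Finset.range p, R * φ (x ^ i) * R * (1 - avg p φ ⁅x, y⁆) := by
    rw [avg, mul_smul_comm, smul_mul_assoc, smul_mul_assoc, Finset.mul_sum, Finset.sum_mul,
      Finset.sum_mul]
  rw [e1, Finset.sum_eq_single 0 key]
  · simp [hRi]
  · intro h0
    exact absurd (Finset.mem_range.2 hp.pos) h0

end Avg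
end LemmaQ

section LemmaQHilbert
open scoped commutatorElement InnerProductSpace

variable {H : Type*} [NormedAddCommGroup H] [InnerProductSpace ℂ H]

/-- Unitaries as operators. -/
def opHom (H : Type*) [NormedAddCommGroup H] [InnerProductSpace ℂ H] :
    (H ≃ₗᵢ[ℂ] H) →* (H →L[ℂ] H) where
  toFun u := (u : H →L[ℂ] H)
  map_one' := by ext; rfl
  map_mul' u v := by ext; rfl

@[simp] theorem opHom_apply (u : H ≃ₗᵢ[ℂ] H) (v : H) : opHom H u v = u v := rfl

/-- projection on the fixed vectors of `u` -/
def fixP (p : ℕ) (u : H ≃ₗᵢ[ℂ] H) : H →L[ℂ] H := avg p (opHom H) u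

theorem fixP_inner {p : ℕ} (u : H ≃ₗᵢ[ℂ] H) (hp : p ≠ 0) (hu : u ^ p = 1) (v w : H) :
    ⟪fixP p u v, w⟫_ℂ = ⟪v, fixP p u w⟫_ℂ := by
  have hinv : ∀ (n : ℕ) (a : H), fixP p u ((u ^ n) a) = fixP p u a := by
    intro n a
    have h1 : fixP p u * opHom H (u ^ n) = fixP p u := by
      have := (comm_avg (p := p) (opHom H) (x := u) (a := opHom H (u ^ n))
        (by rw [map_pow]; exact (Commute.refl _).pow_left n))
      unfold fixP
      rw [← this.eq, pow_mul_avg _ hu]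
    exact congrArg (fun T : H →L[ℂ] H => T a) h1
  have hs : ∀ a b : H, ⟪fixP p u a, fixP p u b⟫_ℂ = ⟪a, fixP p u b⟫_ℂ := by
    intro a b
    have h2 : ∀ n : ℕ, ⟪(u ^ n) a, fixP p u b⟫_ℂ = ⟪a, fixP p u b⟫_ℂ := by
      intro n
      have h3 : opHom H (u ^ n) * fixP p u = fixP p u := pow_mul_avg _ hu n
      have h4 : (u ^ n) (fixP p u b) = fixP p u b := congrArg (fun T : H →L[ℂ] H => T b) h3
      conv_lhs => rw [← h4]
      exact (u ^ n).inner_map_map a _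
    have h5 : fixP p u a = (p : ℂ)⁻¹ • ∑ i ∈ Finset.range p, (u ^ i) a := by
      simp only [fixP, avg, smul_apply, sum_apply, opHom_apply]
    rw [h5, inner_smul_left, sum_inner]
    simp only [h2, Finset.sum_const, Finset.card_range]
    have : (p : ℂ) ≠ 0 := by exact_mod_cast hp
    simp [this]
  rw [← hs v w, ← inner_conj_symm, ← hs w v, inner_conj_symm]

theorem fixP_idem {p : ℕ} (u : H ≃ₗᵢ[ℂ] H) (hp : p ≠ 0) (hu : u ^ p = 1) (v : H) :
    fixP p u (fixP p u v) = fixP p u v :=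
  congrArg (fun T : H →L[ℂ] H => T v) (avg_idem (opHom H) hp hu)

theorem fixP_fixed {p : ℕ} (u : H ≃ₗᵢ[ℂ] H) (hu : u ^ p = 1) (v : H) :
    u (fixP p u v) = fixP p u v :=
  congrArg (fun T : H →L[ℂ] H => T v) (mul_avg (opHom H) hu)

theorem pair_est_aux {ξ u v : H} (P R : H →L[ℂ] H) (hu : u = P ξ) (hv : v = R ξ)
    (hP : ∀ a b, ⟪P a, b⟫_ℂ = ⟪a, P b⟫_ℂ) (hPP : ∀ a, P (P a) = P a)
    (hR : ∀ a b, ⟪R a, b⟫_ℂ = ⟪a, R b⟫_ℂ) (hRR : ∀ a, R (R a) = R a)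
    {p : ℕ} (hp : 16 ≤ p) (hRPR : R (P (R ξ)) = (p : ℂ)⁻¹ • R ξ) :
    -(1/4 : ℝ) * (‖ξ - u‖ ^ 2 + ‖ξ - v‖ ^ 2) ≤ 2 * (⟪ξ - u, ξ - v⟫_ℂ).re := by
  have hp' : (16 : ℝ) ≤ p := by exact_mod_cast hp
  have nsq : ∀ a : H, (⟪a, a⟫_ℂ).re = ‖a‖ ^ 2 := fun a => by
    rw [inner_self_eq_norm_sq_to_K]; norm_cast
  have e1 : (⟪ξ, u⟫_ℂ).re = ‖u‖ ^ 2 := by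
    rw [← nsq u, hu, hP, hPP]
  have e2 : (⟪ξ, v⟫_ℂ).re = ‖v‖ ^ 2 := by
    rw [← nsq v, hv, hR, hRR]
  have sy : ∀ a b : H, (⟪a, b⟫_ℂ).re = (⟪b, a⟫_ℂ).re := fun a b => by
    rw [← inner_conj_symm, Complex.conj_re]
  have e3 : ‖ξ - u‖ ^ 2 = ‖ξ‖ ^ 2 - ‖u‖ ^ 2 := by
    rw [← nsq (ξ - u)]
    simp only [inner_sub_left, inner_sub_right, Complex.sub_re, nsq, sy u ξ, e1]; ring
  have e4 : ‖ξ - v‖ ^ 2 = ‖ξ‖ ^ 2 - ‖v‖ ^ 2 := by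
    rw [← nsq (ξ - v)]
    simp only [inner_sub_left, inner_sub_right, Complex.sub_re, nsq, sy v ξ, e2]; ring
  set r := (⟪u, v⟫_ℂ).re with hr
  have e5 : (⟪ξ - u, ξ - v⟫_ℂ).re = ‖ξ‖^2 - ‖u‖^2 - ‖v‖^2 + r := by
    simp only [inner_sub_left, inner_sub_right, Complex.sub_re, nsq, sy u ξ, e1, e2, ← hr]; ring
  have e6 : ‖u + v‖ ^ 2 = ‖u‖^2 + ‖v‖^2 + 2 * r := by
    rw [← nsq (u + v)]
    simp only [inner_add_left, inner_add_right, Complex.add_re, nsq, sy v u, ← hr]; ring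
  -- bound on r
  have n1 : ‖P v‖ ^ 2 = (p : ℝ)⁻¹ * ‖v‖ ^ 2 := by
    have : ⟪P v, P v⟫_ℂ = (p : ℂ)⁻¹ * ⟪v, v⟫_ℂ := by
      have hv' : R v = v := by rw [hv, hRR]
      calc ⟪P v, P v⟫_ℂ = ⟪v, P v⟫_ℂ := by rw [hP, hPP]
        _ = ⟪v, R (P v)⟫_ℂ := by rw [← hR, hv']
        _ = ⟪v, (p : ℂ)⁻¹ • v⟫_ℂ := by rw [hv, hRPR]
        _ = _ := by rw [inner_smul_right]
    have h2 := congrArg Complex.re this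
    rw [nsq, inner_self_eq_norm_sq_to_K] at h2
    rw [h2]
    have : ((p : ℂ)⁻¹ * ((‖v‖ : ℂ)) ^ 2) = (((p : ℝ)⁻¹ * ‖v‖ ^ 2 : ℝ) : ℂ) := by push_cast; rfl
    exact (congrArg Complex.re this).trans (Complex.ofReal_re _)
  have n2 : ‖P v‖ ≤ (1/4) * ‖v‖ := by
    apply le_of_sq_le_sq _ (by positivity)
    rw [n1, mul_pow]
    gcongr
    rw [inv_le_comm₀ (by positivity) (by norm_num)]
    norm_num; linarith
  have n3 : |r| ≤ ‖u‖ * ‖P v‖ := by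
    have : ⟪u, v⟫_ℂ = ⟪u, P v⟫_ℂ := by
      rw [← hP u v, hu, hPP]
    rw [hr, this]
    exact (Complex.abs_re_le_norm _).trans (norm_inner_le_norm _ _)
  have n4 : 2 * |r| ≤ (1/4) * (‖u‖^2 + ‖v‖^2) := by
    nlinarith [norm_nonneg u, norm_nonneg v, sq_nonneg (‖u‖ - ‖v‖),
      mul_le_mul_of_nonneg_left n2 (norm_nonneg u)]
  have r1 := (abs_le.1 (le_refl |r|)).1
  have r2 := (abs_le.1 (le_refl |r|)).2
  -- a + b ≤ (5/4) s
  have n5 : ‖u‖^2 + ‖v‖^2 ≤ (5/4) * ‖ξ‖^2 := by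
    have h1 : ‖u‖^2 + ‖v‖^2 ≤ ‖ξ‖ * ‖u + v‖ := by
      rw [← e1, ← e2, ← Complex.add_re, ← inner_add_right]
      exact (Complex.re_le_norm _).trans (norm_inner_le_norm _ _)
    set a := ‖u‖^2 + ‖v‖^2 with ha
    have ha0 : 0 ≤ a := by positivity
    have h2 : a ^ 2 ≤ ‖ξ‖^2 * ((5/4) * a) := by
      calc a ^ 2 ≤ (‖ξ‖ * ‖u + v‖) ^ 2 := by gcongr
        _ = ‖ξ‖^2 * ‖u + v‖^2 := by ring
        _ ≤ _ := by
          gcongr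
          rw [e6]; linarith
    rcases ha0.eq_or_lt with h0 | h0
    · rw [← h0]; positivity
    · nlinarith
  have n6 : 0 ≤ ‖((5/4 : ℝ) : ℂ) • ξ - (u + v)‖ ^ 2 := by positivity
  have n7 : ‖((5/4 : ℝ) : ℂ) • ξ - (u + v)‖ ^ 2
      = (5/4)^2 * ‖ξ‖^2 - 2 * (5/4) * (‖u‖^2 + ‖v‖^2) + (‖u‖^2 + ‖v‖^2 + 2 * r) := by
    rw [← e6, ← nsq (_ - _)]
    simp only [inner_sub_left, inner_sub_right, inner_add_left, inner_add_right, Complex.sub_re, Complex.add_re, nsq,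
      inner_smul_left, inner_smul_right, Complex.conj_ofReal, Complex.re_ofReal_mul,
      sy u ξ, sy v ξ, e1, e2, sy v u, ← hr, e6]; ring
  rw [n7] at n6
  rw [e3, e4, e5]
  nlinarith

theorem pair_est {p : ℕ} (hp : p.Prime) (hp16 : 16 ≤ p) {x y : H ≃ₗᵢ[ℂ] H} (h : HeisRel p x y)
    (ξ : H) :
    -(1/4 : ℝ) * (‖ξ - fixP p x ξ‖ ^ 2 + ‖ξ - fixP p y ξ‖ ^ 2)
      ≤ 2 * (⟪ξ - fixP p x ξ, ξ - fixP p y ξ⟫_ℂ).re := by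
  have hp0 := hp.ne_zero
  set P := fixP p x with hPdef
  set R := fixP p y with hRdef
  set E := fixP p ⁅x, y⁆ with hEdef
  have hP := fixP_inner x hp0 h.xp
  have hPP := fixP_idem x hp0 h.xp
  have hR := fixP_inner y hp0 h.yp
  have hRR := fixP_idem y hp0 h.yp
  have hE := fixP_inner ⁅x,y⁆ hp0 h.zp
  have hEE := fixP_idem ⁅x,y⁆ hp0 h.zp
  rw [← hPdef] at hP hPP
  rw [← hRdef] at hR hRR
  rw [← hEdef] at hE hEE
  have cPE : Commute P E := by
    refine comm_avg _ (comm_avg _ (h.cx.symm.map (opHom H))).symm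
  have cRE : Commute R E := by
    refine comm_avg _ (comm_avg _ (h.cy.symm.map (opHom H))).symm
  have cPE' : ∀ a, P (E a) = E (P a) := fun a => congrArg (fun T : H →L[ℂ] H => T a) cPE.eq
  have cRE' : ∀ a, R (E a) = E (R a) := fun a => congrArg (fun T : H →L[ℂ] H => T a) cRE.eq
  have hcomm : ∀ a, P (R (E a)) = R (P (E a)) := fun a =>
    congrArg (fun T : H →L[ℂ] H => T a) (heis_comm_avg (opHom H) hp0 h)
  have hcompress : ∀ a, R (P (R (a - E a))) = (p : ℂ)⁻¹ • R (a - E a) := fun a =>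
    congrArg (fun T : H →L[ℂ] H => T a) (heis_compress (opHom H) hp h)
  set ξ0 := E ξ with h0
  set ξ1 := ξ - E ξ with h1
  have hsum : ξ = ξ0 + ξ1 := by rw [h0, h1]; abel
  have hE1 : E ξ1 = 0 := by rw [h1, map_sub, hEE, sub_self]
  have hE0 : E ξ0 = ξ0 := by rw [h0, hEE]
  have orth : ∀ a b : H, E a = a → E b = 0 → ⟪a, b⟫_ℂ = 0 := by
    intro a b ha hb
    rw [← ha, hE, hb, inner_zero_right]
  have orth' : ∀ a b : H, E a = a → E b = 0 → ⟪b, a⟫_ℂ = 0 := by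
    intro a b ha hb
    rw [← inner_conj_symm, orth a b ha hb, map_zero]
  have aP0 : E (ξ0 - P ξ0) = ξ0 - P ξ0 := by rw [map_sub, ← cPE', hE0]
  have aR0 : E (ξ0 - R ξ0) = ξ0 - R ξ0 := by rw [map_sub, ← cRE', hE0]
  have aP1 : E (ξ1 - P ξ1) = 0 := by rw [map_sub, ← cPE', hE1, map_zero, sub_zero]
  have aR1 : E (ξ1 - R ξ1) = 0 := by rw [map_sub, ← cRE', hE1, map_zero, sub_zero]
  have dP : ξ - P ξ = (ξ0 - P ξ0) + (ξ1 - P ξ1) := by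
    conv_lhs => rw [hsum, map_add]
    abel
  have dR : ξ - R ξ = (ξ0 - R ξ0) + (ξ1 - R ξ1) := by
    conv_lhs => rw [hsum, map_add]
    abel
  have pyth : ∀ a b : H, E a = a → E b = 0 → ‖a + b‖ ^ 2 = ‖a‖ ^ 2 + ‖b‖ ^ 2 := by
    intro a b ha hb
    have := norm_add_sq_eq_norm_sq_add_norm_sq_of_inner_eq_zero a b (orth a b ha hb)
    simpa [sq] using this
  have main := pair_est_aux (ξ := ξ1) P R rfl rfl hP hPP hR hRR hp16 (hcompress ξ)
  have pos : 0 ≤ (⟪ξ0 - P ξ0, ξ0 - R ξ0⟫_ℂ).re := by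
    have cm : P (R ξ0) = R (P ξ0) := by rw [h0]; exact hcomm ξ
    have : ⟪ξ0 - P ξ0, ξ0 - R ξ0⟫_ℂ
        = ⟪(ξ0 - P ξ0) - R (ξ0 - P ξ0), (ξ0 - P ξ0) - R (ξ0 - P ξ0)⟫_ℂ := by
      set a := ξ0 - P ξ0 with ha
      have e1 : ⟪a, ξ0 - R ξ0⟫_ℂ = ⟪a, a - R a⟫_ℂ := by
        have hPa : P a = 0 := by rw [ha, map_sub, hPP, sub_self]
        have : ξ0 - R ξ0 = (a - R a) + P (ξ0 - R ξ0) := by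
          rw [ha, map_sub, map_sub, cm]; abel
        rw [this, inner_add_right, ← hP, hPa, inner_zero_left, add_zero]
      have e2 : ⟪R a, a - R a⟫_ℂ = 0 := by
        rw [hR, map_sub, hRR, sub_self, inner_zero_right]
      rw [e1, inner_sub_left a (R a) (a - R a), e2, sub_zero]
    rw [this]
    exact inner_self_nonneg (𝕜 := ℂ)
  rw [dP, dR, pyth _ _ aP0 aP1, pyth _ _ aR0 aR1]
  have : ⟪ξ0 - P ξ0 + (ξ1 - P ξ1), ξ0 - R ξ0 + (ξ1 - R ξ1)⟫_ℂ
      = ⟪ξ0 - P ξ0, ξ0 - R ξ0⟫_ℂ + ⟪ξ1 - P ξ1, ξ1 - R ξ1⟫_ℂ := by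
    simp only [inner_add_left _ (ξ1 - P ξ1), inner_add_right _ (ξ0 - R ξ0),
      orth _ _ aP0 aR1, orth' _ _ aR0 aP1, add_zero, zero_add]
  rw [this, Complex.add_re]
  nlinarith [sq_nonneg ‖ξ0 - P ξ0‖, sq_nonneg ‖ξ0 - R ξ0‖]

end LemmaQHilbert

section LemmaQFinal
open scoped commutatorElement InnerProductSpace

variable {H : Type*} [NormedAddCommGroup H] [InnerProductSpace ℂ H]

theorem norm_sub_fixP_le {p : ℕ} (hp : p ≠ 0) (u : H ≃ₗᵢ[ℂ] H) (ξ : H) {δ : ℝ}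
    (h : ‖u ξ - ξ‖ ≤ δ) : ‖ξ - fixP p u ξ‖ ≤ p * δ := by
  have hδ : 0 ≤ δ := (norm_nonneg _).trans h
  have hp' : (p : ℂ) ≠ 0 := by exact_mod_cast hp
  have h1 : ∀ n : ℕ, ‖ξ - (u ^ n) ξ‖ ≤ n * δ := by
    intro n
    induction n with
    | zero => simp
    | succ n ih =>
      have : ξ - (u ^ (n+1)) ξ = (ξ - (u ^ n) ξ) + (u ^ n) (ξ - u ξ) := by
        rw [pow_succ, map_sub]; simp
      rw [this]
      refine (norm_add_le _ _).trans ?_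
      rw [LinearIsometryEquiv.norm_map, norm_sub_rev ξ (u ξ)]
      push_cast; linarith
  have h2 : ξ - fixP p u ξ = (p : ℂ)⁻¹ • ∑ i ∈ Finset.range p, (ξ - (u ^ i) ξ) := by
    simp only [fixP, avg, smul_apply, sum_apply, opHom_apply, Finset.sum_sub_distrib,
      Finset.sum_const, Finset.card_range, smul_sub]
    rw [← Nat.cast_smul_eq_nsmul ℂ, smul_smul, inv_mul_cancel₀ hp', one_smul]
  rw [h2, norm_smul]
  have h3 : ‖∑ i ∈ Finset.range p, (ξ - (u ^ i) ξ)‖ ≤ p * (p * δ) := by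
    refine (norm_sum_le_of_le (f := fun i => ξ - (u ^ i) ξ) _ (n := fun _ => p * δ) ?_).trans (by simp)
    intro i hi
    refine (h1 i).trans ?_
    gcongr
    exact (Finset.mem_range.1 hi).le
  have hp2 : (0:ℝ) < p := by exact_mod_cast Nat.pos_of_ne_zero hp
  calc ‖(p : ℂ)⁻¹‖ * ‖∑ i ∈ Finset.range p, (ξ - (u ^ i) ξ)‖ ≤ (p : ℝ)⁻¹ * (p * (p * δ)) := by
        rw [norm_inv, Complex.norm_natCast]; gcongr
    _ = p * δ := by field_simp

theorem lemmaQ [CompleteSpace H] {p : ℕ} (hp : p.Prime) (hp16 : 16 ≤ p)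
    (u : Fin 3 → (H ≃ₗᵢ[ℂ] H)) (hu : ∀ i j, HeisRel p (u i) (u j)) (ξ : H) {δ : ℝ}
    (hδ : ∀ i, ‖u i ξ - ξ‖ ≤ δ) :
    ∃ η : H, (∀ i, u i η = η) ∧ ‖η - ξ‖ ≤ 3 * p * δ := by
  have hp0 := hp.ne_zero
  have nsq : ∀ a : H, (⟪a, a⟫_ℂ).re = ‖a‖ ^ 2 := fun a => by
    rw [inner_self_eq_norm_sq_to_K]; norm_cast
  have sy : ∀ a b : H, (⟪a, b⟫_ℂ).re = (⟪b, a⟫_ℂ).re := fun a b => by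
    rw [← inner_conj_symm, Complex.conj_re]
  set Δ : H →L[ℂ] H := ∑ i, (1 - fixP p (u i)) with hΔ
  have Δa : ∀ v, Δ v = ∑ i, (v - fixP p (u i) v) := by
    intro v; simp [hΔ]
  have hsym : ∀ v w, ⟪Δ v, w⟫_ℂ = ⟪v, Δ w⟫_ℂ := by
    intro v w
    simp only [Δa, sum_inner, inner_sum, inner_sub_left, inner_sub_right]
    refine Finset.sum_congr rfl fun i _ => ?_
    rw [fixP_inner (u i) hp0 (hu i i).xp]
  have hq : ∀ v, (⟪Δ v, v⟫_ℂ).re = ∑ i, ‖v - fixP p (u i) v‖ ^ 2 := by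
    intro v
    rw [Δa, sum_inner, Complex.re_sum]
    refine Finset.sum_congr rfl fun i _ => ?_
    rw [← nsq (v - _)]
    have : ⟪v - fixP p (u i) v, fixP p (u i) v⟫_ℂ = 0 := by
      rw [← fixP_inner (u i) hp0 (hu i i).xp, map_sub, fixP_idem (u i) hp0 (hu i i).xp, sub_self,
        inner_zero_left]
    rw [inner_sub_right _ v, this, sub_zero]
  have hq0 : ∀ v, 0 ≤ (⟪Δ v, v⟫_ℂ).re := fun v => by rw [hq]; positivity
  have key : ∀ v, (⟪Δ v, v⟫_ℂ).re ≤ 2 * ‖Δ v‖ ^ 2 := by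
    intro v
    rw [hq, ← nsq (Δ v), Δa]
    have h01 := pair_est hp hp16 (hu 0 1) v
    have h02 := pair_est hp hp16 (hu 0 2) v
    have h12 := pair_est hp hp16 (hu 1 2) v
    simp only [Fin.sum_univ_three]
    generalize v - fixP p (u 0) v = a0 at *
    generalize v - fixP p (u 1) v = a1 at *
    generalize v - fixP p (u 2) v = a2 at *
    simp only [inner_add_left, inner_add_right, Complex.add_re, nsq, sy a1 a0, sy a2 a0, sy a2 a1]
    linarith
  have gap : ∀ v, ‖Δ v‖ ^ 2 ≤ 2 * (⟪Δ (Δ v), Δ v⟫_ℂ).re := by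
    intro v
    have h1 := hq0 (v - (2 : ℂ) • Δ v)
    have h2 := key v
    have e1 : (⟪Δ (Δ v), v⟫_ℂ).re = ‖Δ v‖ ^ 2 := by rw [hsym, nsq]
    have e2 : (⟪Δ v, Δ v⟫_ℂ).re = ‖Δ v‖ ^ 2 := nsq _
    have h3 : (⟪Δ (v - (2 : ℂ) • Δ v), v - (2 : ℂ) • Δ v⟫_ℂ).re
        = (⟪Δ v, v⟫_ℂ).re - 4 * ‖Δ v‖ ^ 2 + 4 * (⟪Δ (Δ v), Δ v⟫_ℂ).re := by
      simp only [map_sub, map_smul, inner_sub_left, inner_sub_right, inner_smul_left,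
        inner_smul_right, Complex.sub_re, map_ofNat]
      have r2 : ∀ z : ℂ, ((2 : ℂ) * z).re = 2 * z.re := fun z => by simp
      simp only [r2, e1, e2, Complex.sub_re]; ring
    linarith
  have gap' : ∀ v ∈ Δ.kerᗮ, ‖v‖ ^ 2 ≤ 2 * (⟪Δ v, v⟫_ℂ).re := by
    have hadj : ContinuousLinearMap.adjoint Δ = Δ := by
      symm
      rw [ContinuousLinearMap.eq_adjoint_iff]
      exact hsym
    rw [ContinuousLinearMap.orthogonal_ker, hadj]
    intro v hv
    have hcl : IsClosed {v : H | ‖v‖ ^ 2 ≤ 2 * (⟪Δ v, v⟫_ℂ).re} := by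
      apply isClosed_le
      · fun_prop
      · refine continuous_const.mul (Complex.continuous_re.comp ?_)
        exact Continuous.inner Δ.continuous continuous_id
    have hv' : v ∈ closure ((LinearMap.range (Δ : H →ₗ[ℂ] H) : Submodule ℂ H) : Set H) := hv
    refine (closure_minimal ?_ hcl) hv'
    rintro _ ⟨w, rfl⟩
    exact gap w
  have hcompl : Δ.ker.HasOrthogonalProjection := inferInstance
  obtain ⟨η, hη, ζ, hζ, hsum⟩ := Submodule.exists_add_mem_mem_orthogonal (K := Δ.ker) ξ
  have hη' : Δ η = 0 := hη
  refine ⟨η, ?_, ?_⟩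
  · have := hq η
    rw [hη', inner_zero_left, Complex.zero_re] at this
    have h0 := (Finset.sum_eq_zero_iff_of_nonneg (fun i _ => by positivity)).1 this.symm
    intro i
    have hi := h0 i (Finset.mem_univ i)
    have : η - fixP p (u i) η = 0 := by simpa using hi
    rw [sub_eq_zero.1 this, fixP_fixed _ (hu i i).xp]
  · have h1 := gap' ζ hζ
    have h2 : (⟪Δ ζ, ζ⟫_ℂ).re = (⟪Δ ξ, ξ⟫_ℂ).re := by
      have : Δ ξ = Δ ζ := by rw [hsum, map_add, hη', zero_add]
      rw [this]
      conv_rhs => rw [hsum, inner_add_right, hsym, hη', inner_zero_right, zero_add]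
    have hδ0 : 0 ≤ δ := (norm_nonneg _).trans (hδ 0)
    rw [h2, hq] at h1
    have h3 : ∑ i, ‖ξ - fixP p (u i) ξ‖ ^ 2 ≤ 3 * (p * δ) ^ 2 := by
      have : ∀ i, ‖ξ - fixP p (u i) ξ‖ ^ 2 ≤ (p * δ) ^ 2 := fun i => by
        gcongr
        exact norm_sub_fixP_le hp0 (u i) ξ (hδ i)
      calc ∑ i, ‖ξ - fixP p (u i) ξ‖ ^ 2 ≤ ∑ i : Fin 3, (p * δ) ^ 2 :=
            Finset.sum_le_sum fun i _ => this i
        _ = _ := by simp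
    have h4 : ‖η - ξ‖ = ‖ζ‖ := by rw [hsum]; simp
    rw [h4]
    apply le_of_sq_le_sq _ (by positivity)
    nlinarith [sq_nonneg (p * δ)]

end LemmaQFinal

section TheGroup
open scoped commutatorElement InnerProductSpace

/-- relators -/
def relators (p : ℕ) : Set (FreeGroup (Fin 3)) :=
  {r | (∃ i : Fin 3, r = FreeGroup.of i ^ p) ∨
    ∃ i j : Fin 3, r = ⁅FreeGroup.of i, ⁅FreeGroup.of i, FreeGroup.of j⁆⁆}

/-- The group. -/
abbrev Grp (p : ℕ) : Type := PresentedGroup (relators p)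

/-- generators -/
def gen (p : ℕ) (i : Fin 3) : Grp p := PresentedGroup.of i

theorem gen_heis (p : ℕ) (i j : Fin 3) : HeisRel p (gen p i) (gen p j) := by
  have hpow : ∀ i, gen p i ^ p = 1 := by
    intro i
    have : PresentedGroup.mk (relators p) (FreeGroup.of i ^ p) = 1 :=
      PresentedGroup.one_of_mem (Or.inl ⟨i, rfl⟩)
    rwa [map_pow] at this
  have hc : ∀ i j, Commute (gen p i) ⁅gen p i, gen p j⁆ := by
    intro i j
    have : PresentedGroup.mk (relators p) ⁅FreeGroup.of i, ⁅FreeGroup.of i, FreeGroup.of j⁆⁆ = 1 :=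
      PresentedGroup.one_of_mem (Or.inr ⟨i, j, rfl⟩)
    rw [map_commutatorElement, map_commutatorElement] at this
    exact commutatorElement_eq_one_iff_commute.1 this
  refine ⟨hpow i, hpow j, hc i j, ?_⟩
  rw [← commutatorElement_inv]
  exact (hc j i).inv_right

/-- universal property -/
def grpLift {Γ : Type*} [Group Γ] {p : ℕ} (u : Fin 3 → Γ) (hu : ∀ i j, HeisRel p (u i) (u j)) :
    Grp p →* Γ := PresentedGroup.toGroup (f := u) (by
  rintro r (⟨i, rfl⟩ | ⟨i, j, rfl⟩)
  · rw [map_pow, FreeGroup.lift_apply_of]; exact (hu i i).xp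
  · simp only [map_commutatorElement, FreeGroup.lift_apply_of]
    exact commutatorElement_eq_one_iff_commute.2 (hu i j).cx)

@[simp] theorem grpLift_gen {Γ : Type*} [Group Γ] {p : ℕ} (u : Fin 3 → Γ)
    (hu : ∀ i j, HeisRel p (u i) (u j)) (i : Fin 3) : grpLift u hu (gen p i) = u i :=
  PresentedGroup.toGroup.of _

theorem closure_gen (p : ℕ) : Subgroup.closure (Set.range (gen p)) = ⊤ :=
  PresentedGroup.closure_range_of _

theorem grp_induction {p : ℕ} {C : Grp p → Prop} (h1 : C 1) (hm : ∀ a b, C a → C b → C (a * b))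
    (hi : ∀ a, C a → C a⁻¹) (hg : ∀ i, C (gen p i)) (g : Grp p) : C g := by
  have : g ∈ Subgroup.closure (Set.range (gen p)) := by rw [closure_gen]; trivial
  induction this using Subgroup.closure_induction with
  | mem x hx => obtain ⟨i, rfl⟩ := hx; exact hg i
  | one => exact h1
  | mul a b _ _ ha hb => exact hm a b ha hb
  | inv a _ ha => exact hi a ha

instance (p : ℕ) : Countable (Grp p) := by
  have : Countable (FreeGroup (Fin 3)) := by unfold FreeGroup; infer_instance
  exact (PresentedGroup.mk_surjective (relators p)).countable

theorem grp_propertyT {p : ℕ} (hp : p.Prime) (hp16 : 16 ≤ p) : HasPropertyT (Grp p) := by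
  intro H _ _ _ π hπ
  classical
  have hp0 : (0 : ℝ) < p := by exact_mod_cast hp.pos
  obtain ⟨ξ, hξ1, hξ⟩ := hπ (Finset.univ.image (gen p)) (1 / (6 * p)) (by positivity)
  obtain ⟨η, hη, hd⟩ := lemmaQ hp hp16 (fun i => π (gen p i)) (fun i j => (gen_heis p i j).map π) ξ
    (δ := 1 / (6 * p)) (fun i => (hξ _ (Finset.mem_image_of_mem _ (Finset.mem_univ i))).le)
  refine ⟨η, ?_, ?_⟩
  · rintro rfl
    rw [zero_sub, norm_neg, hξ1] at hd
    have : 3 * (p : ℝ) * (1 / (6 * p)) = 1 / 2 := by field_simp; norm_num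
    rw [this] at hd; norm_num at hd
  · refine grp_induction (by simp) ?_ ?_ hη
    · intro a b ha hb; rw [map_mul, LinearIsometryEquiv.coe_mul, Function.comp_apply, hb, ha]
    · intro a ha
      rw [map_inv]
      conv_lhs => rw [← ha]
      exact (π a).symm_apply_apply η

end TheGroup

section Height
open scoped commutatorElement
open Polynomial

/-- elementary operations -/
def elA (R : Type*) [CommRing R] : Equiv.Perm (R × R × R) where
  toFun v := (v.1, v.2.1 + v.1, v.2.2)
  invFun v := (v.1, v.2.1 - v.1, v.2.2)
  left_inv v := by simp
  right_inv v := by simp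

def elB (R : Type*) [CommRing R] : Equiv.Perm (R × R × R) where
  toFun v := (v.1, v.2.1, v.2.2 + v.2.1)
  invFun v := (v.1, v.2.1, v.2.2 - v.2.1)
  left_inv v := by simp
  right_inv v := by simp

def elC {R : Type*} [CommRing R] (t : R) : Equiv.Perm (R × R × R) where
  toFun v := (v.1 + t * v.2.2, v.2.1, v.2.2)
  invFun v := (v.1 - t * v.2.2, v.2.1, v.2.2)
  left_inv v := by simp
  right_inv v := by simp

variable {R : Type*} [CommRing R]

theorem elA_pow (n : ℕ) (v : R × R × R) : (elA R ^ n) v = (v.1, v.2.1 + n * v.1, v.2.2) := by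
  induction n with
  | zero => simp
  | succ n ih =>
    rw [pow_succ', Equiv.Perm.mul_apply, ih]
    simp only [elA, Equiv.coe_fn_mk, Nat.cast_succ]; ext <;> simp; ring

theorem elB_pow (n : ℕ) (v : R × R × R) : (elB R ^ n) v = (v.1, v.2.1, v.2.2 + n * v.2.1) := by
  induction n with
  | zero => simp
  | succ n ih =>
    rw [pow_succ', Equiv.Perm.mul_apply, ih]
    simp only [elB, Equiv.coe_fn_mk, Nat.cast_succ]; ext <;> simp; ring

theorem elC_pow (t : R) (n : ℕ) (v : R × R × R) :
    (elC t ^ n) v = (v.1 + n * (t * v.2.2), v.2.1, v.2.2) := by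
  induction n with
  | zero => simp
  | succ n ih =>
    rw [pow_succ', Equiv.Perm.mul_apply, ih]
    simp only [elC, Equiv.coe_fn_mk, Nat.cast_succ]; ext <;> simp; ring

theorem elA_inv (v : R × R × R) : (elA R)⁻¹ v = (v.1, v.2.1 - v.1, v.2.2) := rfl
theorem elB_inv (v : R × R × R) : (elB R)⁻¹ v = (v.1, v.2.1, v.2.2 - v.2.1) := rfl
theorem elC_inv (t : R) (v : R × R × R) : (elC t)⁻¹ v = (v.1 - t * v.2.2, v.2.1, v.2.2) := rfl
theorem elA_app (v : R × R × R) : (elA R) v = (v.1, v.2.1 + v.1, v.2.2) := rfl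
theorem elB_app (v : R × R × R) : (elB R) v = (v.1, v.2.1, v.2.2 + v.2.1) := rfl
theorem elC_app (t : R) (v : R × R × R) : (elC t) v = (v.1 + t * v.2.2, v.2.1, v.2.2) := rfl

theorem el_heis (p : ℕ) [CharP R p] (t : R) (i j : Fin 3) :
    HeisRel p (![elA R, elB R, elC t] i) (![elA R, elB R, elC t] j) := by
  have hpow : ∀ i, (![elA R, elB R, elC t] i) ^ p = 1 := by
    intro i
    fin_cases i
    · ext v : 1; simp [elA_pow]
    · ext v : 1; simp [elB_pow]
    · ext v : 1; simp [elC_pow]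
  have hc : ∀ i j, Commute (![elA R, elB R, elC t] i)
      ⁅![elA R, elB R, elC t] i, ![elA R, elB R, elC t] j⁆ := by
    intro i j
    fin_cases i <;> fin_cases j <;> (ext v : 1) <;>
    · simp only [commutatorElement_def, Equiv.Perm.mul_apply, Fin.zero_eta, Fin.mk_one, Fin.reduceFinMk,
        Matrix.cons_val, elA_inv, elB_inv, elC_inv, elA_app, elB_app, elC_app]
      try (ext <;> simp <;> ring)
  refine ⟨hpow i, hpow j, hc i j, ?_⟩
  rw [← commutatorElement_inv]
  exact (hc j i).inv_right

/-- shifted degree -/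
def sdeg {F : Type*} [Field F] (f : F[X]) : ℕ := open Classical in if f = 0 then 0 else f.natDegree + 1

theorem sdeg_zero {F : Type*} [Field F] : sdeg (0 : F[X]) = 0 := by simp [sdeg]

theorem sdeg_eq_zero {F : Type*} [Field F] {f : F[X]} : sdeg f = 0 ↔ f = 0 := by
  unfold sdeg; split_ifs <;> simp_all

theorem sdeg_X_mul {F : Type*} [Field F] {f : F[X]} (hf : f ≠ 0) : sdeg (Polynomial.X * f) = sdeg f + 1 := by
  have : Polynomial.X * f ≠ 0 := mul_ne_zero X_ne_zero hf
  rw [sdeg, sdeg, if_neg this, if_neg hf, natDegree_X_mul hf]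

theorem sdeg_add {F : Type*} [Field F] {f g : F[X]} (h : sdeg g < sdeg f) :
    sdeg (g + f) = sdeg f := by
  have hf : f ≠ 0 := by rintro rfl; simp [sdeg_zero] at h
  by_cases hg : g = 0
  · simp [hg]
  · have h' : g.natDegree < f.natDegree := by
      simpa [sdeg, hf, hg] using h
    have hn := natDegree_add_eq_right_of_natDegree_lt h'
    have : g + f ≠ 0 := by
      intro h0; rw [h0] at hn; simp at hn; omega
    rw [sdeg, sdeg, if_neg this, if_neg hf, hn]

theorem sdeg_natCast_mul {p : ℕ} [Fact p.Prime] {n : ℕ} (hn : ¬ p ∣ n) (f : (ZMod p)[X]) :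
    sdeg ((n : (ZMod p)[X]) * f) = sdeg f := by
  have h0 : (n : ZMod p) ≠ 0 := by rwa [Ne, ZMod.natCast_eq_zero_iff]
  have h1 : ((n : (ZMod p)[X]) * f) = C (n : ZMod p) * f := by simp
  rw [h1]
  unfold sdeg
  have : C (n : ZMod p) * f = 0 ↔ f = 0 := by
    rw [mul_eq_zero, or_iff_right]
    rwa [C_eq_zero]
  rw [natDegree_C_mul h0]
  split_ifs with h2 h3 h3
  · rfl
  · exact absurd (this.1 h2) h3
  · exact absurd (this.2 h3) h2
  · rfl

/-- total shifted degree -/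
def tdeg {F : Type*} [Field F] (v : F[X] × F[X] × F[X]) : ℕ := sdeg v.1 + sdeg v.2.1 + sdeg v.2.2

theorem exists_up {p : ℕ} [Fact p.Prime] (v : (ZMod p)[X] × (ZMod p)[X] × (ZMod p)[X]) (hv : v ≠ 0) :
    ∃ i : Fin 3, ∀ n : ℕ, ¬ p ∣ n → tdeg v <
      tdeg (((![elA _, elB _, elC (Polynomial.X : (ZMod p)[X])] i) ^ n) v) := by
  obtain ⟨x, y, z⟩ := v
  by_cases h1 : sdeg y < sdeg x
  · refine ⟨0, fun n hn => ?_⟩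
    simp only [Matrix.cons_val, elA_pow, tdeg]
    rw [sdeg_add (by rwa [sdeg_natCast_mul hn]), sdeg_natCast_mul hn]
    omega
  by_cases h2 : sdeg z < sdeg y
  · refine ⟨1, fun n hn => ?_⟩
    simp only [Matrix.cons_val, elB_pow, tdeg]
    rw [sdeg_add (by rwa [sdeg_natCast_mul hn]), sdeg_natCast_mul hn]
    omega
  by_cases h3 : sdeg x < sdeg (Polynomial.X * z)
  · refine ⟨2, fun n hn => ?_⟩
    simp only [Matrix.cons_val, elC_pow, tdeg]
    rw [sdeg_add (by rwa [sdeg_natCast_mul hn]), sdeg_natCast_mul hn]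
    omega
  exfalso
  by_cases hz : z = 0
  · subst hz
    rw [sdeg_zero] at h2
    have hy : y = 0 := sdeg_eq_zero.1 (by omega)
    subst hy
    rw [sdeg_zero] at h1
    have hx : x = 0 := sdeg_eq_zero.1 (by omega)
    subst hx
    exact hv rfl
  · rw [sdeg_X_mul hz] at h3
    omega

end Height

section Panels

/-- same panel -/
def SameP {p : ℕ} (j : Fin 3) (m g : Grp p) : Prop := m * g⁻¹ ∈ Subgroup.zpowers (gen p j)

theorem SameP.refl {p : ℕ} (j : Fin 3) (g : Grp p) : SameP j g g := by
  simp [SameP, one_mem]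

theorem SameP.symm {p : ℕ} {j : Fin 3} {m g : Grp p} (h : SameP j m g) : SameP j g m := by
  have := inv_mem h
  simpa [SameP] using this

theorem SameP.trans {p : ℕ} {j : Fin 3} {m g k : Grp p} (h : SameP j m g) (h' : SameP j g k) :
    SameP j m k := by
  have := mul_mem h h'
  simpa [SameP] using this

theorem exists_height {p : ℕ} [Fact p.Prime] : ∃ (ht : Grp p → ℕ) (σ : Grp p → Fin 3),
    ∀ g m : Grp p, SameP (σ g) m g → m ≠ g → ht g < ht m := by
  let ρ : Grp p →* Equiv.Perm (_ × _ × _) :=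
    grpLift _ (el_heis p (Polynomial.X : Polynomial (ZMod p)))
  let v0 : Polynomial (ZMod p) × Polynomial (ZMod p) × Polynomial (ZMod p) := (1, 0, 0)
  have hfix : ∀ g, ρ g 0 = 0 := by
    refine grp_induction (by simp) ?_ ?_ ?_
    · intro a b ha hb; rw [map_mul, Equiv.Perm.mul_apply, hb, ha]
    · intro a ha; rw [map_inv, Equiv.Perm.inv_eq_iff_eq, ha]
    · intro i
      simp only [ρ, grpLift_gen]
      fin_cases i <;> simp [elA_app, elB_app, elC_app]
  have hne : ∀ g, ρ g v0 ≠ 0 := by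
    intro g h
    rw [← hfix g] at h
    have := (ρ g).injective h
    simp [v0] at this
  choose σ hσ using fun g => exists_up (ρ g v0) (hne g)
  refine ⟨fun g => tdeg (ρ g v0), σ, ?_⟩
  intro g m hs hmg
  obtain ⟨k, hk⟩ := Subgroup.mem_zpowers_iff.1 hs
  have hp0 : (p : ℤ) ≠ 0 := by exact_mod_cast (Fact.out : p.Prime).ne_zero
  have hpp : gen p (σ g) ^ p = 1 := (gen_heis p (σ g) 0).xp
  obtain ⟨n, hn⟩ : ∃ n : ℕ, gen p (σ g) ^ n = m * g⁻¹ := by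
    refine ⟨(k % p).toNat, ?_⟩
    rw [← hk, ← zpow_natCast, Int.toNat_of_nonneg (Int.emod_nonneg _ hp0)]
    conv_rhs => rw [← Int.emod_add_mul_ediv k p, zpow_add, zpow_mul, zpow_natCast, hpp]
    simp
  have hnd : ¬ p ∣ n := by
    rintro ⟨q, rfl⟩
    rw [pow_mul, hpp, one_pow] at hn
    exact hmg (mul_inv_eq_one.1 hn.symm)
  have := hσ g n hnd
  have hm : ρ m v0 = ((ρ (gen p (σ g))) ^ n) (ρ g v0) := by
    rw [← map_pow, hn, ← Equiv.Perm.mul_apply, ← map_mul]; simp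
  simp only [hm]
  simpa only [ρ, grpLift_gen] using this

theorem grp_infinite {p : ℕ} [Fact p.Prime] : Infinite (Grp p) := by
  obtain ⟨ht, σ, h⟩ := exists_height (p := p)
  by_contra hfin
  rw [not_infinite_iff_finite] at hfin
  obtain ⟨g, hg⟩ := Finite.exists_max ht
  -- the generator is nontrivial
  have key : ∀ i, gen p i ≠ 1 := by
    intro i hi
    let d : Grp p →* Multiplicative (ZMod p) :=
      grpLift (fun _ => Multiplicative.ofAdd 1) (fun i j => by
        have : (Multiplicative.ofAdd (1 : ZMod p)) ^ p = 1 := by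
          rw [← ofAdd_nsmul]; simp
        exact ⟨this, this, mul_comm _ _, mul_comm _ _⟩)
    have : d (gen p i) = 1 := by rw [hi, map_one]
    simp only [d, grpLift_gen] at this
    rw [ofAdd_eq_one] at this
    exact one_ne_zero this
  have := h g (gen p (σ g) * g) (by simp [SameP]) (by simpa using key _)
  exact absurd (hg (gen p (σ g) * g)) (by omega)

open Classical in
theorem exists_panel_fun {p : ℕ} [Fact p.Prime] : ∃ n : Fin 3 → Grp p → ℤ,
    (∀ j g, n j (gen p j * g) = n j g) ∧ ∀ g, ∑ j, n j g = if g = 1 then 1 else 0 := by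
  obtain ⟨ht, σ, h⟩ := exists_height (p := p)
  let Q : Fin 3 → Grp p → Grp p → Prop := fun j g m => σ m = j ∧ SameP j m g
  let F : (g : Grp p) → ((m : Grp p) → ht m < ht g → ℤ) → ℤ := fun g rec =>
    (if g = 1 then 1 else 0) - ∑ j, if hh : ∃ m, ht m < ht g ∧ Q j g m
      then rec hh.choose hh.choose_spec.1 else 0
  let v : Grp p → ℤ := (measure ht).wf.fix F
  have hv : ∀ g, v g = (if g = 1 then 1 else 0) - ∑ j, if hh : ∃ m, ht m < ht g ∧ Q j g m
      then v hh.choose else 0 := by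
    intro g
    exact (measure ht).wf.fix_eq F g
  let n : Fin 3 → Grp p → ℤ := fun j g => if hh : ∃ m, Q j g m then v hh.choose else 0
  have huniq : ∀ j g m m', Q j g m → Q j g m' → m = m' := by
    rintro j g m m' ⟨rfl, h1⟩ ⟨h2', h2⟩
    by_contra hne
    have a1 := h m m' (h2.trans h1.symm) (Ne.symm hne)
    have a2 := h m' m (by rw [h2']; exact h1.trans h2.symm) hne
    omega
  have hn : ∀ j g m, Q j g m → n j g = v m := by
    intro j g m hq
    have hh : ∃ m, Q j g m := ⟨m, hq⟩
    simp only [n]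
    rw [dif_pos hh, huniq j g _ _ hh.choose_spec hq]
  have hn0 : ∀ j g, (¬ ∃ m, Q j g m) → n j g = 0 := by
    intro j g hq
    simp only [n]
    rw [dif_neg hq]
  refine ⟨n, ?_, ?_⟩
  · intro j g
    have hs : SameP j (gen p j * g) g := by simp [SameP]
    by_cases hq : ∃ m, Q j g m
    · obtain ⟨m, hm⟩ := hq
      rw [hn j g m hm, hn j _ m ⟨hm.1, hm.2.trans hs.symm⟩]
    · rw [hn0 j g hq, hn0]
      rintro ⟨m, hm⟩
      exact hq ⟨m, hm.1, hm.2.trans hs⟩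
  · intro g
    have e1 : n (σ g) g = v g := hn _ _ _ ⟨rfl, SameP.refl _ _⟩
    have e2 : ∀ j, (if hh : ∃ m, ht m < ht g ∧ Q j g m then v hh.choose else 0)
        = if j = σ g then 0 else n j g := by
      intro j
      by_cases hj : j = σ g
      · rw [if_pos hj, dif_neg]
        rintro ⟨m, hm1, hm2⟩
        by_cases hmg : m = g
        · subst hmg; omega
        · have := h g m (by rw [← hj]; exact hm2.2) hmg
          omega
      · rw [if_neg hj]
        split_ifs with hh
        · exact (hn j g _ hh.choose_spec.2).symm
        · rw [hn0]
          rintro ⟨m, hm⟩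
          refine hh ⟨m, ?_, hm⟩
          have hgm : g ≠ m := by
            rintro rfl; exact hj hm.1.symm
          exact h m g (by rw [hm.1]; exact hm.2.symm) hgm
    have e3 := hv g
    simp only [e2] at e3
    have e4 : ∑ j, n j g = n (σ g) g + ∑ j, (if j = σ g then 0 else n j g) := by
      rw [← Finset.add_sum_erase _ _ (Finset.mem_univ (σ g))]
      congr 1
      rw [← Finset.add_sum_erase (f := fun j => if j = σ g then 0 else n j g) _ (Finset.mem_univ (σ g))]
      rw [if_pos rfl, zero_add]
      refine Finset.sum_congr rfl fun j hj => ?_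
      rw [if_neg (Finset.ne_of_mem_erase hj)]
    rw [e4, e1, e3]; ring

end Panels

section FiniteHeis
open scoped commutatorElement

theorem HeisRel.finite_closure {Γ : Type*} [Group Γ] {p : ℕ} (hp : p ≠ 0) {x y : Γ}
    (h : HeisRel p x y) : Finite (Subgroup.closure {x, y}) := by
  have hmul : ∀ i j k i' j' k' : ℕ, (⁅x, y⁆ ^ k * y ^ j * x ^ i) * (⁅x, y⁆ ^ k' * y ^ j' * x ^ i')
      = ⁅x, y⁆ ^ (k + k' + i * j') * y ^ (j + j') * x ^ (i + i') := by
    intro i j k i' j' k'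
    have c1 : Commute (y ^ j * x ^ i) (⁅x, y⁆ ^ k') :=
      ((h.cy.pow_left j).mul_left (h.cx.pow_left i)).pow_right k'
    have c2 : Commute (y ^ j) (⁅x, y⁆ ^ (i * j')) := (h.cy.pow_left j).pow_right _
    calc _ = ⁅x, y⁆ ^ k * ((y ^ j * x ^ i) * ⁅x, y⁆ ^ k') * y ^ j' * x ^ i' := by
          simp only [mul_assoc]
      _ = ⁅x, y⁆ ^ k * ⁅x, y⁆ ^ k' * y ^ j * (x ^ i * y ^ j') * x ^ i' := by
          rw [c1.eq]; simp only [mul_assoc]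
      _ = ⁅x, y⁆ ^ k * ⁅x, y⁆ ^ k' * (y ^ j * ⁅x, y⁆ ^ (i * j')) * y ^ j' * x ^ i * x ^ i' := by
          rw [h.pow_mul_pow]; simp only [mul_assoc]
      _ = _ := by
          rw [c2.eq, pow_add, pow_add, pow_add, pow_add]; simp only [mul_assoc]
  let S : Submonoid Γ :=
    { carrier := {g | ∃ i j k : ℕ, g = ⁅x, y⁆ ^ k * y ^ j * x ^ i}
      one_mem' := ⟨0, 0, 0, by simp⟩
      mul_mem' := by
        rintro _ _ ⟨i, j, k, rfl⟩ ⟨i', j', k', rfl⟩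
        exact ⟨_, _, _, hmul i j k i' j' k'⟩ }
  have hxS : x ∈ S := ⟨1, 0, 0, by simp⟩
  have hyS : y ∈ S := ⟨0, 1, 0, by simp⟩
  have hzS : ⁅x, y⁆ ∈ S := ⟨0, 0, 1, by simp⟩
  have hinv : ∀ a : Γ, a ^ p = 1 → a ∈ S → a⁻¹ ∈ S := by
    intro a ha haS
    have : a⁻¹ = a ^ (p - 1) := by
      rw [inv_eq_iff_mul_eq_one, ← pow_succ', Nat.sub_add_cancel (Nat.one_le_iff_ne_zero.2 hp), ha]
    rw [this]; exact pow_mem haS _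
  let S' : Subgroup Γ := { S with
    inv_mem' := by
      rintro _ ⟨i, j, k, rfl⟩
      show _ ∈ S
      rw [mul_inv_rev, mul_inv_rev, ← inv_pow, ← inv_pow, ← inv_pow]
      exact mul_mem (pow_mem (hinv _ h.xp hxS) _) (mul_mem (pow_mem (hinv _ h.yp hyS) _)
        (pow_mem (hinv _ h.zp hzS) _)) }
  have hle : Subgroup.closure {x, y} ≤ S' := by
    rw [Subgroup.closure_le]
    rintro a (rfl | rfl)
    · exact hxS
    · exact hyS
  have hfin : (S' : Set Γ).Finite := by
    refine (Set.finite_range (fun t : Fin p × Fin p × Fin p =>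
      ⁅x, y⁆ ^ (t.1 : ℕ) * y ^ (t.2.1 : ℕ) * x ^ (t.2.2 : ℕ))).subset ?_
    rintro _ ⟨i, j, k, rfl⟩
    have hpos := Nat.pos_of_ne_zero hp
    refine ⟨(⟨k % p, Nat.mod_lt _ hpos⟩, ⟨j % p, Nat.mod_lt _ hpos⟩, ⟨i % p, Nat.mod_lt _ hpos⟩), ?_⟩
    have hm : ∀ (a : Γ), a ^ p = 1 → ∀ n : ℕ, a ^ (n % p) = a ^ n := fun a ha n =>
      (pow_eq_pow_mod n ha).symm
    simp only [hm _ h.zp, hm _ h.yp, hm _ h.xp]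
  exact (hfin.subset hle).to_subtype

end FiniteHeis

section Cocycle

/-- left translation on functions -/
def trN (Γ : Type*) [Group Γ] (g : Γ) : (Γ → ℤ) →+ (Γ → ℤ) where
  toFun f h := f (g⁻¹ * h)
  map_zero' := rfl
  map_add' _ _ := rfl

theorem trN_apply {Γ : Type*} [Group Γ] (g : Γ) (f : Γ → ℤ) (h : Γ) :
    trN Γ g f h = f (g⁻¹ * h) := rfl

theorem trN_one {Γ : Type*} [Group Γ] (f : Γ → ℤ) : trN Γ 1 f = f := by
  ext h; simp [trN_apply]

theorem trN_mul {Γ : Type*} [Group Γ] (g h : Γ) (f : Γ → ℤ) :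
    trN Γ (g * h) f = trN Γ g (trN Γ h f) := by
  ext k; simp [trN_apply, mul_assoc]

/-- finitely supported functions -/
def finS (Γ : Type*) : AddSubgroup (Γ → ℤ) where
  carrier := {f | f.support.Finite}
  zero_mem' := by simp
  add_mem' {a b} ha hb := (Set.Finite.union ha hb).subset (Function.support_add a b)
  neg_mem' {a} ha := by simpa [Function.support_neg] using ha

theorem mem_finS {Γ : Type*} {f : Γ → ℤ} : f ∈ finS Γ ↔ f.support.Finite := Iff.rfl

theorem trN_mem {Γ : Type*} [Group Γ] (g : Γ) {f : Γ → ℤ} (hf : f ∈ finS Γ) :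
    trN Γ g f ∈ finS Γ := by
  rw [mem_finS] at *
  have : (trN Γ g f).support = (fun h => g⁻¹ * h) ⁻¹' f.support := rfl
  rw [this]
  exact hf.preimage (mul_right_injective _).injOn

/-- quotient -/
abbrev QN (Γ : Type*) : Type _ := (Γ → ℤ) ⧸ finS Γ

/-- action on the quotient -/
def sgQ (Γ : Type*) [Group Γ] : Γ →* Equiv.Perm (QN Γ) :=
  MonoidHom.toHomPerm
    { toFun := fun g => (QuotientAddGroup.map (finS Γ) (finS Γ) (trN Γ g)
        (fun _ hf => trN_mem g hf) : QN Γ → QN Γ)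
      map_one' := by
        funext q
        obtain ⟨f, rfl⟩ := QuotientAddGroup.mk_surjective q
        exact congrArg QuotientAddGroup.mk (trN_one f)
      map_mul' := by
        intro g h
        funext q
        obtain ⟨f, rfl⟩ := QuotientAddGroup.mk_surjective q
        exact congrArg QuotientAddGroup.mk (trN_mul g h f) }

theorem sgQ_mk {Γ : Type*} [Group Γ] (g : Γ) (f : Γ → ℤ) :
    sgQ Γ g (f : QN Γ) = ((trN Γ g f : Γ → ℤ) : QN Γ) := rfl

theorem sgQ_add {Γ : Type*} [Group Γ] (g : Γ) (a b : QN Γ) :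
    sgQ Γ g (a + b) = sgQ Γ g a + sgQ Γ g b := by
  obtain ⟨f, rfl⟩ := QuotientAddGroup.mk_surjective a
  obtain ⟨f', rfl⟩ := QuotientAddGroup.mk_surjective b
  exact congrArg QuotientAddGroup.mk (map_add (trN Γ g) f f')

theorem sgQ_zero {Γ : Type*} [Group Γ] (g : Γ) : sgQ Γ g 0 = 0 := by
  have := sgQ_add g 0 0
  simpa using this

theorem sgQ_neg {Γ : Type*} [Group Γ] (g : Γ) (a : QN Γ) : sgQ Γ g (-a) = - sgQ Γ g a := by
  have := sgQ_add g a (-a)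
  rw [add_neg_cancel, sgQ_zero] at this
  exact (neg_eq_of_add_eq_zero_right this.symm).symm

/-- the pair subgroups -/
def Pk (p : ℕ) (k : Fin 3) : Subgroup (Grp p) := Subgroup.closure {gen p (k + 1), gen p (k + 2)}

theorem gen_mem_Pk {p : ℕ} {i k : Fin 3} (h : i ≠ k) : gen p i ∈ Pk p k := by
  have : i = k + 1 ∨ i = k + 2 := by revert i k; decide
  apply Subgroup.subset_closure
  rcases this with rfl | rfl <;> simp

instance Pk_finite (p : ℕ) [hp : Fact p.Prime] (k : Fin 3) : Finite (Pk p k) :=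
  (gen_heis p (k + 1) (k + 2)).finite_closure hp.out.ne_zero

open Classical in
/-- the delta function at the identity -/
def del1 (Γ : Type*) [Group Γ] : Γ → ℤ := fun g => if g = 1 then 1 else 0

theorem del1_mem (Γ : Type*) [Group Γ] : del1 Γ ∈ finS Γ := by
  rw [mem_finS]
  refine (Set.finite_singleton (1 : Γ)).subset ?_
  intro g hg
  by_contra h
  exact hg (if_neg h)

theorem exists_zg_data {p : ℕ} [Fact p.Prime] :
    ∃ (ℓ : Grp p → Grp p → ℤ) (q : Fin 3 → Grp p → ℤ),
      (∀ k, ∀ g ∈ Pk p k, ℓ g - (q k - trN _ g (q k)) ∈ finS (Grp p)) ∧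
      (∀ g h, ℓ g + trN _ g (ℓ h) - ℓ (g * h) ∈ finS (Grp p)) ∧
      ∀ i, trN _ (gen p i) (q (i + 1) - q (i + 2)) - (q (i + 1) - q (i + 2)) =
        if i = 2 then trN _ (gen p 2) (del1 _) - del1 _ else 0 := by
  obtain ⟨n, hn1, hn2⟩ := exists_panel_fun (p := p)
  have hinv : ∀ j, trN _ (gen p j) (n j) = n j := by
    intro j
    ext h
    rw [trN_apply, ← hn1 j, mul_inv_cancel_left]
  have hsum : n 0 + n 1 + n 2 = del1 _ := by
    ext g
    have := hn2 g
    rw [Fin.sum_univ_three] at this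
    exact this
  let q : Fin 3 → Grp p → ℤ := ![n 1, - n 0, 0]
  have hq : ∀ i, trN _ (gen p i) (q (i + 1) - q (i + 2)) - (q (i + 1) - q (i + 2)) =
        if i = 2 then trN _ (gen p 2) (del1 _) - del1 _ else 0 := by
    intro i
    have e := fun j => hinv j
    fin_cases i
    · simp [q, hinv 0]
    · simp [q, hinv 1]
    · have e1 : n 1 - -n 0 = del1 _ - n 2 := by rw [← hsum]; abel
      simp [q, ← hsum, hinv 2]
      abel
  have hqm : ∀ i, trN _ (gen p i) (q (i + 1) - q (i + 2)) - (q (i + 1) - q (i + 2)) ∈ finS (Grp p) := by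
    intro i
    rw [hq]
    split_ifs
    · exact sub_mem (trN_mem _ (del1_mem _)) (del1_mem _)
    · exact zero_mem _
  let qq : Fin 3 → QN (Grp p) := fun k => (q k : QN (Grp p))
  let τ : Fin 3 → Equiv.Perm (QN (Grp p)) := fun k => Equiv.addLeft (qq k)
  have hconj : ∀ (k : Fin 3) (g : Grp p) (x : QN (Grp p)),
      (τ k * sgQ _ g * (τ k)⁻¹) x = sgQ _ g x + (qq k - sgQ _ g (qq k)) := by
    intro k g x
    have : (τ k)⁻¹ x = -qq k + x := by
      rw [Equiv.Perm.inv_eq_iff_eq]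
      simp [τ]
    rw [Equiv.Perm.mul_apply, Equiv.Perm.mul_apply, this, sgQ_add, sgQ_neg]
    simp only [τ, Equiv.coe_addLeft]
    abel
  let u : Fin 3 → Equiv.Perm (QN (Grp p)) := fun i =>
    τ (i + 1) * sgQ _ (gen p i) * (τ (i + 1))⁻¹
  have hu : ∀ i k, i ≠ k → u i = τ k * sgQ _ (gen p i) * (τ k)⁻¹ := by
    intro i k hik
    have : k = i + 1 ∨ k = i + 2 := by revert i k; decide
    rcases this with rfl | rfl
    · rfl
    · ext x
      simp only [u]
      rw [hconj, hconj]
      congr 1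
      have h1 : ((trN _ (gen p i) (q (i + 1) - q (i + 2)) - (q (i + 1) - q (i + 2)) : Grp p → ℤ) :
          QN (Grp p)) = 0 := (QuotientAddGroup.eq_zero_iff _).2 (hqm i)
      have h2 : sgQ _ (gen p i) (qq (i+1)) - sgQ _ (gen p i) (qq (i+2)) - (qq (i+1) - qq (i+2)) = 0 := by
        rw [← h1, map_sub]; rfl
      rw [← sub_eq_zero, ← neg_eq_zero, ← h2]
      abel
  have hcj : ∀ k (g : Grp p), ((MulAut.conj (τ k)).toMonoidHom.comp (sgQ _)) g
      = τ k * sgQ _ g * (τ k)⁻¹ := fun k g => rfl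
  have hheis : ∀ i j, HeisRel p (u i) (u j) := by
    intro i j
    obtain ⟨k, h1, h2⟩ : ∃ k : Fin 3, i ≠ k ∧ j ≠ k := by revert i j; decide
    have := (gen_heis p i j).map ((MulAut.conj (τ k)).toMonoidHom.comp (sgQ (Grp p)))
    rw [hcj, hcj] at this
    rw [hu i k h1, hu j k h2]
    exact this
  let Φ : Grp p →* Equiv.Perm (QN (Grp p)) := grpLift u hheis
  have hΦP : ∀ k, ∀ g ∈ Pk p k, Φ g = τ k * sgQ _ g * (τ k)⁻¹ := by
    intro k g hg
    have : Set.EqOn Φ ((MulAut.conj (τ k)).toMonoidHom.comp (sgQ (Grp p)))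
        (Subgroup.closure {gen p (k + 1), gen p (k + 2)}) := by
      apply MonoidHom.eqOn_closure
      rintro x (rfl | rfl)
      · rw [hcj]; simp only [Φ, grpLift_gen]; exact hu _ _ (by clear hg; revert k; decide)
      · rw [hcj]; simp only [Φ, grpLift_gen]; exact hu _ _ (by clear hg; revert k; decide)
    exact this hg
  have hΦ : ∀ g x, Φ g x = sgQ _ g x + Φ g 0 := by
    refine grp_induction (by simp) ?_ ?_ ?_
    · intro a b ha hb x
      rw [map_mul, Equiv.Perm.mul_apply, Equiv.Perm.mul_apply, hb x, ha, ha (Φ b 0), sgQ_add,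
        map_mul, Equiv.Perm.mul_apply]
      abel
    · intro a ha x
      rw [map_inv, Equiv.Perm.inv_eq_iff_eq, ha, sgQ_add, ← Equiv.Perm.mul_apply, ← map_mul]
      have := ha ((Φ a)⁻¹ 0)
      have h0 : Φ a ((Φ a)⁻¹ 0) = 0 := (Φ a).apply_symm_apply 0
      rw [h0] at this
      rw [add_assoc, ← this]; simp
    · intro i x
      simp only [Φ, grpLift_gen, u]
      rw [hconj, hconj, sgQ_zero, zero_add]
  choose ℓ hℓ using fun g => QuotientAddGroup.mk_surjective (Φ g 0)
  refine ⟨ℓ, q, ?_, ?_, hq⟩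
  · intro k g hg
    rw [← QuotientAddGroup.eq_zero_iff]
    have h1 : Φ g 0 = qq k - sgQ _ g (qq k) := by
      rw [hΦP k g hg, hconj, sgQ_zero, zero_add]
    have : ((ℓ g - (q k - trN _ g (q k)) : Grp p → ℤ) : QN (Grp p))
        = (ℓ g : QN (Grp p)) - (qq k - sgQ _ g (qq k)) := rfl
    rw [this, hℓ, h1, sub_self]
  · intro g h
    rw [← QuotientAddGroup.eq_zero_iff]
    have : ((ℓ g + trN _ g (ℓ h) - ℓ (g * h) : Grp p → ℤ) : QN (Grp p))
        = (ℓ g : QN (Grp p)) + sgQ _ g (ℓ h : QN (Grp p)) - (ℓ (g * h) : QN (Grp p)) := rfl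
    rw [this, hℓ, hℓ, hℓ, map_mul, Equiv.Perm.mul_apply, hΦ g (Φ h 0)]
    abel

end Cocycle

section Reduction

lemma red_aux1 {A : Type*} [AddCommGroup A] (K : ℕ) (x1 y1 y2 z u v : A) :
    u + -v + K • y1 =
      K • (x1 + -z) + u + -(K • (x1 + y2 + -y1 + -z) + v) + K • y2 := by
  simp only [smul_add, smul_neg]; abel

lemma red_aux2 {A : Type*} [AddCommGroup A] (x u v : A) :
    u + -v = x + u + -(x + v) := by abel

lemma red_aux3 {A : Type*} [AddCommGroup A] (u v z : A) :
    u + -v + (v + -u + z) = z := by abel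

theorem reduction {p : ℕ} [Fact p.Prime] {M B : Type*} [CommGroup M] [CommGroup B]
    (α : Grp p →* MulAut M) (π : M →* B)
    (ι : finS (Grp p) →+ Additive M)
    (hι : ∀ g (f : finS (Grp p)), (ι ⟨trN _ g f.1, trN_mem g f.2⟩).toMul = α g (ι f).toMul)
    (ℓ : Grp p → Grp p → ℤ) (q : Fin 3 → Grp p → ℤ)
    (h1 : ∀ k, ∀ g ∈ Pk p k, ℓ g - (q k - trN _ g (q k)) ∈ finS (Grp p))
    (h2 : ∀ g h, ℓ g + trN _ g (ℓ h) - ℓ (g * h) ∈ finS (Grp p))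
    (h3 : ∀ i, trN _ (gen p i) (q (i + 1) - q (i + 2)) - (q (i + 1) - q (i + 2)) =
        if i = 2 then trN _ (gen p 2) (del1 _) - del1 _ else 0)
    (β : Grp p → M)
    (hβ : ∀ g h, π (ι ⟨_, h2 g h⟩).toMul = π (β g * α g (β h) * (β (g * h))⁻¹)) :
    ∃ (K : ℕ) (f : Fin 3 → M), 0 < K ∧ (∀ i, π (α (gen p i) (f i)) = π (f i)) ∧
      f 0 * f 1 * f 2 = (ι ⟨del1 _, del1_mem _⟩).toMul ^ K := by
  classical
  haveI : ∀ k, Fintype (Pk p k) := fun k => Fintype.ofFinite _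
  -- the elements r
  let m : (k : Fin 3) → Pk p k → finS (Grp p) := fun k g => ⟨_, h1 k g g.2⟩
  let r : (k : Fin 3) → Pk p k → M := fun k g => (ι (m k g)).toMul * (β g)⁻¹
  have hm : ∀ k (g h : Pk p k), m k g + ⟨trN _ g.1 (m k h).1, trN_mem g.1 (m k h).2⟩
      = ⟨_, h2 g h⟩ + m k (g * h) := by
    intro k g h
    apply Subtype.ext
    show (ℓ g.1 - (q k - trN (Grp p) g.1 (q k))) +
        trN (Grp p) g.1 (ℓ h.1 - (q k - trN (Grp p) h.1 (q k)))
      = (ℓ g.1 + trN (Grp p) g.1 (ℓ h.1) - ℓ (g.1 * h.1)) +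
        (ℓ (g.1 * h.1) - (q k - trN (Grp p) (g.1 * h.1) (q k)))
    rw [trN_mul, map_sub, map_sub]; abel
  have hr : ∀ k (g h : Pk p k), π (r k g) * π (α g (r k h)) = π (r k (g * h)) := by
    intro k g h
    have e1 := congrArg (fun t => π (ι t).toMul) (hm k g h)
    simp only [map_add, toMul_add, map_mul, hι, hβ] at e1
    simp only [r, map_mul, map_inv, Subgroup.coe_mul] at e1 ⊢
    calc _ = (π (ι (m k g)).toMul * π (α g (ι (m k h)).toMul)) * (π (β g))⁻¹ * (π (α g (β h)))⁻¹ := by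
          ac_rfl
      _ = π (ι (m k (g * h))).toMul * (π (β (↑g * ↑h)))⁻¹ := by
          rw [e1]
          rw [mul_inv_eq_iff_eq_mul, mul_inv_eq_iff_eq_mul]
          ac_rfl
  let Rk : Fin 3 → M := fun k => ∏ h, r k h
  have hRk : ∀ k (g : Pk p k), π (r k g) ^ Fintype.card (Pk p k) * π (α g (Rk k)) = π (Rk k) := by
    intro k g
    simp only [Rk, map_prod]
    rw [← Finset.card_univ, ← Finset.prod_const, ← Finset.prod_mul_distrib]
    simp only [hr]
    exact Fintype.prod_equiv (Equiv.mulLeft g) _ _ (fun h => rfl)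
  let N : Fin 3 → ℕ := fun k => Fintype.card (Pk p k)
  have hN : ∀ k, 0 < N k := fun k => Fintype.card_pos
  let K : ℕ := N 0 * N 1 * N 2
  let R' : Fin 3 → M := fun k => Rk k ^ (N (k + 1) * N (k + 2))
  have hK : ∀ k, N k * (N (k + 1) * N (k + 2)) = K := by
    intro k
    fin_cases k
    · simp [K]; ring
    · simp [K]; ring
    · simp [K]; ring
  have hR' : ∀ k (g : Pk p k), π (r k g) ^ K * π (α g (R' k)) = π (R' k) := by
    intro k g
    simp only [R', map_pow]
    rw [← hK k, pow_mul, ← mul_pow, hRk]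
  have hgen : ∀ i, π (α (gen p i) (R' (i + 1) * (R' (i + 2))⁻¹)) *
      (if i = 2 then π (α (gen p i) (ι ⟨del1 _, del1_mem _⟩).toMul) ^ K else 1)
      = π (R' (i + 1) * (R' (i + 2))⁻¹) *
        (if i = 2 then π (ι ⟨del1 _, del1_mem _⟩).toMul ^ K else 1) := by
    intro i
    have a1 : gen p i ∈ Pk p (i + 1) := gen_mem_Pk (by revert i; decide)
    have a2 : gen p i ∈ Pk p (i + 2) := gen_mem_Pk (by clear a1; revert i; decide)
    have b1 := hR' _ ⟨_, a1⟩
    have b2 := hR' _ ⟨_, a2⟩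
    have hmm : m (i + 1) ⟨_, a1⟩ + (if i = 2 then ⟨del1 _, del1_mem _⟩ else 0) = m (i + 2) ⟨_, a2⟩ +
        (if i = 2 then ⟨_, trN_mem (gen p i) (del1_mem _)⟩ else 0) := by
      have e := h3 i
      rw [map_sub] at e
      by_cases hi : i = 2
      · subst hi
        rw [if_pos rfl] at e
        rw [if_pos rfl, if_pos rfl]
        apply Subtype.ext
        show (ℓ _ - (q _ - trN _ _ (q _))) + del1 _ = (ℓ _ - (q _ - trN _ _ (q _))) + trN _ _ (del1 _)
        have e' := sub_eq_zero.2 e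
        rw [← sub_eq_zero, ← e']
        abel
      · rw [if_neg hi] at e
        rw [if_neg hi, if_neg hi, add_zero, add_zero]
        apply Subtype.ext
        show (ℓ _ - (q _ - trN _ _ (q _))) = (ℓ _ - (q _ - trN _ _ (q _)))
        rw [← sub_eq_zero, ← e]
        abel
    have hmm2 := congrArg (fun t => π (ι t).toMul) hmm
    have c1 : ∀ k (g : Pk p k), π (r k g) = π (ι (m k g)).toMul * (π (β g))⁻¹ := by
      intro k g; simp only [r, map_mul, map_inv]
    rw [c1] at b1 b2
    simp only [map_add, toMul_add, map_mul] at hmm2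
    by_cases hi : i = 2
    · simp only [if_pos hi] at hmm2 ⊢
      have e0 : π (ι ⟨_, trN_mem (gen p i) (del1_mem _)⟩).toMul
        = π (α (gen p i) (ι ⟨del1 _, del1_mem _⟩).toMul) := by rw [← hι]
      rw [e0] at hmm2
      simp only [map_mul, map_inv]
      rw [← b1, ← b2]
      generalize π (ι (m (i + 1) ⟨gen p i, a1⟩)).toMul = x1 at *
      generalize π (ι (m (i + 2) ⟨gen p i, a2⟩)).toMul = x2 at *
      generalize π (α (gen p i) (ι ⟨del1 _, del1_mem _⟩).toMul) = y1 at *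
      generalize π (ι ⟨del1 _, del1_mem _⟩).toMul = y2 at *
      have hx : x1 * y2 * y1⁻¹ = x2 := by rw [hmm2]; simp
      rw [← hx]
      exact red_aux1 (A := Additive B) K x1 y1 y2 (π (β (gen p i))) _ _
    · simp only [if_neg hi, map_zero, toMul_zero, map_one, mul_one] at hmm2 ⊢
      simp only [map_mul, map_inv]
      rw [← b1, ← b2, hmm2]
      exact red_aux2 (A := Additive B) _ _ _
  refine ⟨K, fun i => R' (i + 1) * (R' (i + 2))⁻¹ *
    (if i = 2 then (ι ⟨del1 _, del1_mem _⟩).toMul ^ K else 1), ?_, ?_, ?_⟩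
  · simp only [K]
    have := hN 0; have := hN 1; have := hN 2
    positivity
  · intro i
    have := hgen i
    by_cases hi : i = 2
    · simp only [if_pos hi] at this ⊢
      simp only [map_mul, map_pow] at this ⊢
      exact this
    · simp only [if_neg hi] at this ⊢
      simp only [map_mul, map_one] at this ⊢
      exact this
  · simp
    generalize (ι ⟨del1 _, del1_mem _⟩).toMul ^ K = z
    exact red_aux3 (A := Additive M) _ _ z

end Reduction

section Tens
open scoped TensorProduct InnerProductSpace
open UniformSpace

/-- Extension of a unitary to the completion. -/
def complU {E : Type*} [NormedAddCommGroup E] [InnerProductSpace ℂ E] (e : E ≃ₗᵢ[ℂ] E) :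
    Completion E ≃ₗᵢ[ℂ] Completion E where
  toFun := Completion.map e
  invFun := Completion.map e.symm
  left_inv := fun x => by
    rw [← Function.comp_apply (f := Completion.map e.symm),
      Completion.map_comp e.symm.isometry.uniformContinuous e.isometry.uniformContinuous]
    simp
  right_inv := fun x => by
    rw [← Function.comp_apply (f := Completion.map e),
      Completion.map_comp e.isometry.uniformContinuous e.symm.isometry.uniformContinuous]
    simp
  map_add' := fun x y => by
    refine Completion.induction_on₂ x y (isClosed_eq ?_ ?_) fun a b => ?_
    · exact (Completion.continuous_map (f := e)).comp continuous_add
    · exact ((Completion.continuous_map (f := e)).comp continuous_fst).add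
        ((Completion.continuous_map (f := e)).comp continuous_snd)
    · rw [← Completion.coe_add, Completion.map_coe e.isometry.uniformContinuous,
        Completion.map_coe e.isometry.uniformContinuous,
        Completion.map_coe e.isometry.uniformContinuous, map_add, Completion.coe_add]
  map_smul' := fun c x => by
    refine Completion.induction_on x (isClosed_eq ?_ ?_) fun a => ?_
    · exact Completion.continuous_map.comp (continuous_const_smul _)
    · exact (continuous_const_smul c).comp (Completion.continuous_map (f := e))
    · rw [← Completion.coe_smul, Completion.map_coe e.isometry.uniformContinuous,
        Completion.map_coe e.isometry.uniformContinuous, map_smul, Completion.coe_smul,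
        RingHom.id_apply]
  norm_map' := fun x => by
    show ‖Completion.map e x‖ = ‖x‖
    refine Completion.induction_on x (isClosed_eq ?_ ?_) fun a => ?_
    · exact Completion.continuous_map.norm
    · exact continuous_norm
    · simp only [Completion.map_coe e.isometry.uniformContinuous, Completion.norm_coe,
        LinearIsometryEquiv.norm_map]

lemma complU_coe {E : Type*} [NormedAddCommGroup E] [InnerProductSpace ℂ E] (e : E ≃ₗᵢ[ℂ] E)
    (x : E) : complU e (x : Completion E) = ((e x : E) : Completion E) :=
  Completion.map_coe e.isometry.uniformContinuous x

variable (H : Type*) [NormedAddCommGroup H] [InnerProductSpace ℂ H]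

/-- The Hilbert tensor square. -/
abbrev DD := Completion (H ⊗[ℂ] H)

/-- The elementary tensors. -/
def tm : H →L[ℂ] H →L[ℂ] DD H :=
  (ContinuousLinearMap.compL ℂ H (H ⊗[ℂ] H) (DD H)
    (Completion.toComplₗᵢ (𝕜 := ℂ) (E := H ⊗[ℂ] H)).toContinuousLinearMap).comp
    (TensorProduct.mkL ℂ H H)

variable {H}

lemma tm_apply (v w : H) : tm H v w = ((v ⊗ₜ[ℂ] w : H ⊗[ℂ] H) : DD H) := rfl

lemma inner_tm (v w v' w' : H) : ⟪tm H v w, tm H v' w'⟫_ℂ = ⟪v, v'⟫_ℂ * ⟪w, w'⟫_ℂ := by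
  rw [tm_apply, tm_apply, Completion.inner_coe, TensorProduct.inner_tmul]

lemma norm_tm (v w : H) : ‖tm H v w‖ = ‖v‖ * ‖w‖ := by
  rw [tm_apply, Completion.norm_coe, TensorProduct.norm_tmul]

/-- Tensor product of unitaries. -/
def tU : (H ≃ₗᵢ[ℂ] H) × (H ≃ₗᵢ[ℂ] H) →* (DD H ≃ₗᵢ[ℂ] DD H) where
  toFun u := complU (TensorProduct.congrIsometry u.1 u.2)
  map_one' := by
    ext x
    refine Completion.induction_on x (isClosed_eq ?_ ?_) fun a => ?_
    · exact (LinearIsometryEquiv.continuous _)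
    · exact (LinearIsometryEquiv.continuous _)
    · rw [complU_coe]
      simp only [Prod.fst_one, Prod.snd_one]
      erw [TensorProduct.congrIsometry_refl_refl]
      rfl
  map_mul' u v := by
    ext x
    refine Completion.induction_on x (isClosed_eq ?_ ?_) fun a => ?_
    · exact (LinearIsometryEquiv.continuous _)
    · exact (LinearIsometryEquiv.continuous _)
    · rw [LinearIsometryEquiv.coe_mul, Function.comp_apply, complU_coe, complU_coe, complU_coe]
      congr 1
      induction a using TensorProduct.induction_on with
      | zero => simp
      | tmul x y => simp [TensorProduct.congrIsometry_apply]; rfl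
      | add x y hx hy => rw [map_add, hx, hy, map_add, map_add]

lemma tU_tm (u : (H ≃ₗᵢ[ℂ] H) × (H ≃ₗᵢ[ℂ] H)) (v w : H) :
    tU u (tm H v w) = tm H (u.1 v) (u.2 w) := by
  show complU _ _ = _
  rw [tm_apply, complU_coe, tm_apply]
  simp [TensorProduct.congrIsometry_apply]

end Tens

section Extract
open scoped InnerProductSpace ComplexConjugate

variable {H : Type*} [NormedAddCommGroup H] [InnerProductSpace ℂ H] [CompleteSpace H]

/-- Contraction of a tensor by a vector. -/
def Cd (ξ : DD H) (v : H) : H :=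
  (InnerProductSpace.toDual ℂ H).symm ((innerSL ℂ ξ).comp (tm H v))

lemma inner_Cd (ξ : DD H) (v w : H) : ⟪Cd ξ v, w⟫_ℂ = ⟪ξ, tm H v w⟫_ℂ := by
  rw [Cd, InnerProductSpace.toDual_symm_apply]; rfl

lemma Cd_add (ξ : DD H) (v w : H) : Cd ξ (v + w) = Cd ξ v + Cd ξ w := by
  refine ext_inner_right ℂ fun x => ?_
  rw [inner_add_left, inner_Cd, inner_Cd, inner_Cd, map_add, add_apply, inner_add_right]

lemma Cd_smul (ξ : DD H) (c : ℂ) (v : H) : Cd ξ (c • v) = conj c • Cd ξ v := by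
  refine ext_inner_right ℂ fun x => ?_
  rw [inner_smul_left, inner_Cd, inner_Cd, map_smul, smul_apply, inner_smul_right]
  simp

lemma norm_le_of_inner {x : H} {C : ℝ} (hC : 0 ≤ C) (h : ∀ w, ‖⟪x, w⟫_ℂ‖ ≤ C * ‖w‖) : ‖x‖ ≤ C := by
  have := h x
  rw [inner_self_eq_norm_sq_to_K] at this
  by_cases hx : ‖x‖ = 0
  · rw [hx]; exact hC
  · have h0 : 0 < ‖x‖ := lt_of_le_of_ne (norm_nonneg _) (Ne.symm hx)
    simp only [Complex.coe_algebraMap, norm_pow, Complex.norm_real, norm_norm] at this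
    rw [sq] at this
    exact le_of_mul_le_mul_right this h0

lemma norm_Cd_le (ξ : DD H) (v : H) : ‖Cd ξ v‖ ≤ ‖ξ‖ * ‖v‖ := by
  refine norm_le_of_inner (by positivity) fun w => ?_
  rw [inner_Cd]
  refine (norm_inner_le_norm _ _).trans ?_
  rw [norm_tm, mul_assoc]

/-- The positive operator associated with a tensor. -/
def Sop (ξ : DD H) : H →L[ℂ] H :=
  InnerProductSpace.continuousLinearMapOfBilin
    (LinearMap.mkContinuous₂ (LinearMap.mk₂'ₛₗ (starRingEnd ℂ) (RingHom.id ℂ)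
      (fun v w => ⟪Cd ξ w, Cd ξ v⟫_ℂ)
      (fun a b c => by rw [Cd_add, inner_add_right])
      (fun c a b => by rw [Cd_smul, inner_smul_right]; rfl)
      (fun a b c => by rw [Cd_add, inner_add_left])
      (fun c a b => by rw [Cd_smul, inner_smul_left]; simp))
      (‖ξ‖ * ‖ξ‖) (fun v w => by
        refine (norm_inner_le_norm _ _).trans ?_
        have h1 := norm_Cd_le ξ v
        have h2 := norm_Cd_le ξ w
        calc _ ≤ (‖ξ‖ * ‖w‖) * (‖ξ‖ * ‖v‖) := by gcongr
          _ = _ := by ring))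

lemma inner_Sop (ξ : DD H) (v w : H) : ⟪Sop ξ v, w⟫_ℂ = ⟪Cd ξ w, Cd ξ v⟫_ℂ := by
  rw [Sop, InnerProductSpace.continuousLinearMapOfBilin_apply]; rfl

lemma Sop_pos (ξ : DD H) : 0 ≤ Sop ξ := by
  rw [ContinuousLinearMap.nonneg_iff_isPositive, ContinuousLinearMap.isPositive_iff_complex]
  intro x
  rw [inner_Sop, inner_self_eq_norm_sq_to_K]
  constructor
  · norm_cast
  · norm_cast; positivity

lemma Cd_tU (u v : H ≃ₗᵢ[ℂ] H) (ξ : DD H) (x : H) : Cd (tU (u, v) ξ) (u x) = v (Cd ξ x) := by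
  refine ext_inner_right ℂ fun w => ?_
  obtain ⟨w, rfl⟩ := v.surjective w
  rw [inner_Cd, LinearIsometryEquiv.inner_map_map, inner_Cd]
  have : tm H (u x) (v w) = tU (u, v) (tm H x w) := (tU_tm (u, v) x w).symm
  rw [this, LinearIsometryEquiv.inner_map_map]

lemma Sop_tU (u v : H ≃ₗᵢ[ℂ] H) (ξ : DD H) (x : H) : Sop (tU (u, v) ξ) (u x) = u (Sop ξ x) := by
  refine ext_inner_right ℂ fun w => ?_
  obtain ⟨w, rfl⟩ := u.surjective w
  rw [inner_Sop, Cd_tU, Cd_tU, LinearIsometryEquiv.inner_map_map, LinearIsometryEquiv.inner_map_map,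
    inner_Sop]

/-- The shifted operator. -/
def Sh (ξ : DD H) : H →L[ℂ] H := Sop ξ - (1 / 2 : ℂ) • 1

/-- The spectral cut-off. -/
def Pop (ξ : DD H) : H →L[ℂ] H := (Sh ξ)⁺

lemma Sh_sa (ξ : DD H) : IsSelfAdjoint (Sh ξ) := by
  refine (IsSelfAdjoint.of_nonneg (Sop_pos ξ)).sub ?_
  refine IsSelfAdjoint.smul ?_ (IsSelfAdjoint.one _)
  rw [IsSelfAdjoint]; simp

lemma conj_nonneg (u : H ≃ₗᵢ[ℂ] H) {T T' : H →L[ℂ] H} (hT : 0 ≤ T) (h : ∀ x, T' (u x) = u (T x)) :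
    0 ≤ T' := by
  rw [ContinuousLinearMap.nonneg_iff_isPositive, ContinuousLinearMap.isPositive_iff_complex] at *
  intro x
  obtain ⟨x, rfl⟩ := u.surjective x
  rw [h, LinearIsometryEquiv.inner_map_map]
  exact hT x

/-- Conjugation by a unitary. -/
def cj (u : H ≃ₗᵢ[ℂ] H) (T : H →L[ℂ] H) : H →L[ℂ] H :=
  (u.toContinuousLinearEquiv : H →L[ℂ] H).comp
    (T.comp (u.symm.toContinuousLinearEquiv : H →L[ℂ] H))

lemma cj_apply (u : H ≃ₗᵢ[ℂ] H) (T : H →L[ℂ] H) (x : H) : cj u T (u x) = u (T x) := by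
  simp [cj]

lemma Pop_tU (u v : H ≃ₗᵢ[ℂ] H) (ξ : DD H) (x : H) : Pop (tU (u, v) ξ) (u x) = u (Pop ξ x) := by
  have h1 := CFC.posPart_sub_negPart (Sh ξ) (Sh_sa ξ)
  have h2 : (Sh ξ)⁺ * (Sh ξ)⁻ = 0 := CFC.posPart_mul_negPart (Sh ξ)
  have key : Pop (tU (u, v) ξ) = cj u (Pop ξ) := by
    refine (CFC.posPart_negPart_unique (b := cj u (Pop ξ)) (c := cj u ((Sh ξ)⁻)) ?_ ?_ ?_ ?_).1
    · ext x
      obtain ⟨x, rfl⟩ := u.surjective x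
      rw [sub_apply, cj_apply, cj_apply, ← map_sub]
      have : Pop ξ x - (Sh ξ)⁻ x = Sh ξ x := by
        conv_rhs => rw [← h1]
        rfl
      rw [this]
      simp only [Sh, sub_apply, smul_apply, one_apply_eq_self, map_sub, map_smul,
        Sop_tU]
    · ext x
      obtain ⟨x, rfl⟩ := u.surjective x
      rw [mul_apply_eq_comp, cj_apply, cj_apply]
      have : Pop ξ ((Sh ξ)⁻ x) = 0 := by
        exact congrArg (fun T : H →L[ℂ] H => T x) h2
      rw [this]; simp
    · exact conj_nonneg u (CFC.posPart_nonneg _) (cj_apply u _)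
    · exact conj_nonneg u (CFC.negPart_nonneg _) (cj_apply u _)
  rw [key, cj_apply]

variable {ω : H} {ξ : DD H}

lemma Cd_perp (hω : ‖ω‖ = 1) (hξ : ‖ξ - tm H ω ω‖ ≤ 1 / 4) {v : H} (hv : ⟪ω, v⟫_ℂ = 0) :
    ‖Cd ξ v‖ ≤ 1 / 4 * ‖v‖ := by
  refine norm_le_of_inner (by positivity) fun w => ?_
  have e : ⟪Cd ξ v, w⟫_ℂ = ⟪ξ - tm H ω ω, tm H v w⟫_ℂ := by
    rw [inner_Cd, inner_sub_left, inner_tm, hv]; simp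
  rw [e]
  refine (norm_inner_le_norm _ _).trans ?_
  rw [norm_tm, mul_assoc]
  gcongr

lemma Cd_omega (hω : ‖ω‖ = 1) (hξ : ‖ξ - tm H ω ω‖ ≤ 1 / 4) : 3 / 4 ≤ ‖Cd ξ ω‖ := by
  have e : ⟪Cd ξ ω, ω⟫_ℂ = ⟪ξ - tm H ω ω, tm H ω ω⟫_ℂ + 1 := by
    rw [inner_Cd, inner_sub_left, inner_tm, inner_self_eq_norm_sq_to_K, hω]; simp
  have h1 : ‖⟪Cd ξ ω, ω⟫_ℂ‖ ≤ ‖Cd ξ ω‖ := by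
    refine (norm_inner_le_norm _ _).trans ?_
    rw [hω, mul_one]
  have h2 : ‖⟪ξ - tm H ω ω, tm H ω ω⟫_ℂ‖ ≤ 1 / 4 := by
    refine (norm_inner_le_norm _ _).trans ?_
    rw [norm_tm, hω]; linarith
  rw [e] at h1
  have h3 : ‖(1 : ℂ)‖ ≤ ‖⟪ξ - tm H ω ω, tm H ω ω⟫_ℂ + 1‖ + ‖⟪ξ - tm H ω ω, tm H ω ω⟫_ℂ‖ := by
    have := norm_sub_le (⟪ξ - tm H ω ω, tm H ω ω⟫_ℂ + 1) (⟪ξ - tm H ω ω, tm H ω ω⟫_ℂ)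
    simpa using this
  rw [norm_one] at h3
  linarith

lemma re_Sh (ξ : DD H) (v : H) : (⟪Sh ξ v, v⟫_ℂ).re = ‖Cd ξ v‖ ^ 2 - 1 / 2 * ‖v‖ ^ 2 := by
  rw [Sh, sub_apply, smul_apply, inner_sub_left, inner_smul_left, inner_Sop,
    inner_self_eq_norm_sq_to_K, one_apply_eq_self, inner_self_eq_norm_sq_to_K]
  have : (conj (1 / 2 : ℂ)) = ((1 / 2 : ℝ) : ℂ) := by simp [Complex.conj_ofNat]
  rw [this]
  simp only [Complex.coe_algebraMap]
  norm_cast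

lemma re_nonneg {T : H →L[ℂ] H} (hT : 0 ≤ T) (v : H) : 0 ≤ (⟪T v, v⟫_ℂ).re := by
  rw [ContinuousLinearMap.nonneg_iff_isPositive, ContinuousLinearMap.isPositive_iff_complex] at hT
  exact (hT v).2

lemma Pop_omega_ne (hω : ‖ω‖ = 1) (hξ : ‖ξ - tm H ω ω‖ ≤ 1 / 4) : ⟪Pop ξ ω, ω⟫_ℂ ≠ 0 := by
  intro h
  have h1 := CFC.posPart_sub_negPart (Sh ξ) (Sh_sa ξ)
  have h2 := re_Sh ξ ω
  rw [← h1, sub_apply, inner_sub_left] at h2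
  have h3 : ⟪(Sh ξ)⁺ ω, ω⟫_ℂ = 0 := h
  have h4 := re_nonneg (CFC.negPart_nonneg (Sh ξ)) ω
  have h5 := Cd_omega hω hξ
  rw [h3, hω, zero_sub, Complex.neg_re] at h2
  nlinarith

lemma Pop_perp (hω : ‖ω‖ = 1) (hξ : ‖ξ - tm H ω ω‖ ≤ 1 / 4) (z : H) (hz : ⟪ω, Pop ξ z⟫_ℂ = 0) :
    Pop ξ z = 0 := by
  have h1 := CFC.posPart_sub_negPart (Sh ξ) (Sh_sa ξ)
  have h2 := re_Sh ξ (Pop ξ z)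
  rw [← h1, sub_apply, inner_sub_left] at h2
  have h3 : (Sh ξ)⁻ (Pop ξ z) = 0 := by
    exact congrArg (fun T : H →L[ℂ] H => T z) (CFC.negPart_mul_posPart (Sh ξ))
  have h4 := re_nonneg (CFC.posPart_nonneg (Sh ξ)) (Pop ξ z)
  have h5 := Cd_perp hω hξ hz
  rw [h3, inner_zero_left, sub_zero] at h2
  rw [h2] at h4
  have h6 : ‖Cd ξ (Pop ξ z)‖ ^ 2 ≤ (1 / 4 * ‖Pop ξ z‖) ^ 2 := by gcongr
  have : ‖Pop ξ z‖ ^ 2 ≤ 0 := by nlinarith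
  have h7 : ‖Pop ξ z‖ = 0 := by nlinarith [norm_nonneg (Pop ξ z), sq_nonneg ‖Pop ξ z‖, pow_eq_zero_iff (two_ne_zero) |>.1 (le_antisymm this (sq_nonneg _))]
  exact norm_eq_zero.1 h7

lemma Pop_line (hω : ‖ω‖ = 1) (hξ : ‖ξ - tm H ω ω‖ ≤ 1 / 4) (x : H) :
    ∃ c : ℂ, Pop ξ x = c • Pop ξ ω := by
  have h0 := Pop_omega_ne hω hξ
  have h0' : ⟪ω, Pop ξ ω⟫_ℂ ≠ 0 := by
    intro h; apply h0; rw [← inner_conj_symm, h]; simp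
  refine ⟨⟪ω, Pop ξ x⟫_ℂ / ⟪ω, Pop ξ ω⟫_ℂ, ?_⟩
  have := Pop_perp hω hξ (x - (⟪ω, Pop ξ x⟫_ℂ / ⟪ω, Pop ξ ω⟫_ℂ) • ω) (by
    rw [map_sub, map_smul, inner_sub_right, inner_smul_right]
    field_simp; simp)
  rw [map_sub, map_smul, sub_eq_zero] at this
  exact this

end Extract

section Analytic
open scoped InnerProductSpace ComplexConjugate TensorProduct commutatorElement

variable {H : Type*} [NormedAddCommGroup H] [InnerProductSpace ℂ H]

lemma DD_ext {S T : DD H ≃ₗᵢ[ℂ] DD H} (h : ∀ v w, S (tm H v w) = T (tm H v w)) : S = T := by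
  ext x
  refine UniformSpace.Completion.induction_on x (isClosed_eq ?_ ?_) fun a => ?_
  · exact (LinearIsometryEquiv.continuous _)
  · exact (LinearIsometryEquiv.continuous _)
  · induction a using TensorProduct.induction_on with
    | zero => rw [UniformSpace.Completion.coe_zero, map_zero, map_zero]
    | tmul x y => exact h x y
    | add x y hx hy => rw [UniformSpace.Completion.coe_add, map_add, hx, hy, map_add]

variable {p : ℕ} [NeZero p]

/-- Diagonal unitaries. -/
def dg {D : Type*} [NormedAddCommGroup D] [InnerProductSpace ℂ D] :
    (ZMod p → (D ≃ₗᵢ[ℂ] D)) →*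
      (PiLp 2 (fun _ : ZMod p => D) ≃ₗᵢ[ℂ] PiLp 2 (fun _ : ZMod p => D)) where
  toFun u := LinearIsometryEquiv.piLpCongrRight 2 u
  map_one' := by ext; rfl
  map_mul' u v := by ext; rfl

lemma dg_apply {D : Type*} [NormedAddCommGroup D] [InnerProductSpace ℂ D]
    (u : ZMod p → (D ≃ₗᵢ[ℂ] D)) (x : PiLp 2 (fun _ : ZMod p => D)) (k : ZMod p) :
    dg u x k = u k (x k) := rfl

/-- Tensor square combined with cyclic shift. -/
def shU : (H ≃ₗᵢ[ℂ] H) × Multiplicative (ZMod p) →*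
      (PiLp 2 (fun _ : ZMod p => DD H) ≃ₗᵢ[ℂ] PiLp 2 (fun _ : ZMod p => DD H)) where
  toFun u := (LinearIsometryEquiv.piLpCongrLeft 2 ℂ (DD H)
      (Equiv.addRight u.2.toAdd)).trans (LinearIsometryEquiv.piLpCongrRight 2 (fun _ => tU (u.1, u.1)))
  map_one' := by
    ext x k
    show tU (1, 1) (x (k + -0)) = x k
    rw [neg_zero, add_zero, show ((1, 1) : (H ≃ₗᵢ[ℂ] H) × (H ≃ₗᵢ[ℂ] H)) = 1 from rfl, map_one]; rfl
  map_mul' u v := by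
    ext x k
    show tU (u.1 * v.1, u.1 * v.1) (x (k + -(u.2.toAdd + v.2.toAdd))) =
      tU (u.1, u.1) (tU (v.1, v.1) (x ((k + -u.2.toAdd) + -v.2.toAdd)))
    rw [show ((u.1 * v.1, u.1 * v.1) : (H ≃ₗᵢ[ℂ] H) × (H ≃ₗᵢ[ℂ] H)) = (u.1, u.1) * (v.1, v.1)
      from rfl, map_mul, neg_add, add_assoc]; rfl

lemma shU_apply (u : H ≃ₗᵢ[ℂ] H) (x : PiLp 2 (fun _ : ZMod p => DD H)) (k : ZMod p) :
    shU (u, Multiplicative.ofAdd 1) x (k + 1) = tU (u, u) (x k) := by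
  show tU (u, u) (x ((k + 1) + -1)) = _
  rw [add_neg_cancel_right]

lemma heis_prod {Γ : Type*} [Group Γ] {u v : Γ} (h : HeisRel p u v) :
    HeisRel p ((u, Multiplicative.ofAdd (1 : ZMod p)) : Γ × Multiplicative (ZMod p))
      (v, Multiplicative.ofAdd (1 : ZMod p)) := by
  have e : ⁅((u, Multiplicative.ofAdd (1 : ZMod p)) : Γ × Multiplicative (ZMod p)),
      (v, Multiplicative.ofAdd (1 : ZMod p))⁆ = (⁅u, v⁆, 1) := by
    ext
    · rfl
    · simp [commutatorElement_def]
  have e2 : (Multiplicative.ofAdd (1 : ZMod p)) ^ p = 1 := by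
    rw [← ofAdd_nsmul]; simp
  refine ⟨?_, ?_, ?_, ?_⟩
  · ext
    · exact h.xp
    · exact e2
  · ext
    · exact h.yp
    · exact e2
  · rw [e]; exact Prod.ext h.cx (mul_comm _ _)
  · rw [e]; exact Prod.ext h.cy (mul_comm _ _)

lemma norm_pi_le {D : Type*} [NormedAddCommGroup D] [InnerProductSpace ℂ D]
    (x : PiLp 2 (fun _ : ZMod p => D)) {M : ℝ} (hM : 0 ≤ M) (h : ∀ k, ‖x k‖ ≤ M) :
    ‖x‖ ≤ p * M := by
  have hp1 : (1 : ℝ) ≤ p := by exact_mod_cast NeZero.one_le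
  refine abs_le_of_sq_le_sq' ?_ (by positivity) |>.2
  rw [PiLp.norm_sq_eq_of_L2]
  calc ∑ k, ‖x k‖ ^ 2 ≤ ∑ k : ZMod p, M ^ 2 := Finset.sum_le_sum fun k _ => by gcongr; exact h k
    _ = p * M ^ 2 := by simp [ZMod.card]
    _ ≤ (p * M) ^ 2 := by rw [mul_pow]; gcongr; nlinarith

lemma transfer [CompleteSpace H] {ω : H} (hω : ‖ω‖ = 1) {U : H ≃ₗᵢ[ℂ] H} (hUω : U ω = ω)
    {A : ZMod p → (H ≃ₗᵢ[ℂ] H)} (hUA : ∀ k, U * A k = A (k + 1) * U)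
    {ξ ξ' : ZMod p → DD H} (hξ' : ∀ k, ‖ξ' k - tm H ω ω‖ ≤ 1 / 4)
    (h1 : ∀ k, ξ (k + 1) = tU (U, U) (ξ k)) (h2 : ∀ k, ξ' (k + 1) = tU (U, U) (ξ' k))
    (h3 : ∀ k, ξ' k = tU (A k, (A k)⁻¹) (ξ k)) :
    ∃ β : ZMod p → ℂ, (∀ k, β (k + 1) = β k) ∧
      ∀ k, A k (Pop (ξ k) ω) = β k • Pop (ξ' k) ω := by
  have hex : ∀ k, ∃ β : ℂ, A k (Pop (ξ k) ω) = β • Pop (ξ' k) ω := by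
    intro k
    rw [← Pop_tU, ← h3]
    exact Pop_line hω (hξ' k) _
  choose β hβ using hex
  refine ⟨β, fun k => ?_, hβ⟩
  have e1 : Pop (ξ (k + 1)) ω = U (Pop (ξ k) ω) := by
    conv_lhs => rw [h1, ← hUω]
    rw [Pop_tU]
  have e2 : Pop (ξ' (k + 1)) ω = U (Pop (ξ' k) ω) := by
    conv_lhs => rw [h2, ← hUω]
    rw [Pop_tU]
  have e3 := hβ (k + 1)
  rw [e1] at e3
  have e4 : A (k + 1) (U (Pop (ξ k) ω)) = U (A k (Pop (ξ k) ω)) :=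
    (congrArg (fun T : H ≃ₗᵢ[ℂ] H => T (Pop (ξ k) ω)) (hUA k)).symm
  rw [e4, hβ k, map_smul, ← e2] at e3
  have hne : Pop (ξ' (k + 1)) ω ≠ 0 := by
    intro h
    apply Pop_omega_ne hω (hξ' (k + 1))
    rw [h, inner_zero_left]
  exact (smul_left_injective ℂ hne e3).symm

theorem analytic [CompleteSpace H] (hp : p.Prime) (hp16 : 16 ≤ p)
    (U : Fin 3 → (H ≃ₗᵢ[ℂ] H)) (hU : ∀ i j, HeisRel p (U i) (U j)) {ω : H} (hω : ‖ω‖ = 1)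
    (hUω : ∀ i, U i ω = ω) (A : Fin 3 → ZMod p → (H ≃ₗᵢ[ℂ] H))
    (hcomm : ∀ s t k, Commute (A s k) (A t k))
    (hUA : ∀ s k, U s * A s k = A s (k + 1) * U s) (κ : ZMod p → ℂ)
    (hprod : ∀ k x, A 0 k (A 1 k (A 2 k x)) = κ k • x)
    (hδ : ∀ s k, ‖A s k ω - ω‖ ≤ 1 / (1000 * p ^ 2)) (k : ZMod p) : κ (k + 1) = κ k := by
  have hp1 : (1 : ℝ) ≤ p := by exact_mod_cast NeZero.one_le
  set δ : ℝ := 1 / (1000 * p ^ 2) with hδdef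
  have hδ0 : 0 < δ := by positivity
  let Uh : Fin 3 → _ := fun s => shU (p := p) (U s, Multiplicative.ofAdd 1)
  let Ah : Fin 3 → _ := fun s => dg (fun k => tU (A s k, (A s k)⁻¹))
  have hUh : ∀ i j, HeisRel p (Uh i) (Uh j) := fun i j => (heis_prod (hU i j)).map shU
  have hcU : ∀ s, Ah s * Uh s = Uh s * Ah s := by
    intro s
    ext x k
    obtain ⟨k, rfl⟩ : ∃ k', k = k' + 1 := ⟨k - 1, by ring⟩
    show Ah s (Uh s x) (k + 1) = Uh s (Ah s x) (k + 1)
    simp only [Uh, Ah]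
    rw [dg_apply, shU_apply, shU_apply, dg_apply, ← Function.comp_apply (f := tU _),
      ← LinearIsometryEquiv.coe_mul, ← map_mul, ← Function.comp_apply (f := tU (U s, U s)),
      ← LinearIsometryEquiv.coe_mul, ← map_mul]
    congr 2
    ext1
    · exact (hUA s k).symm
    · show (A s (k + 1))⁻¹ * U s = U s * (A s k)⁻¹
      rw [inv_mul_eq_iff_eq_mul, ← mul_assoc, ← hUA, mul_assoc, mul_inv_cancel, mul_one]
  have hprodh : Ah 0 * Ah 1 * Ah 2 = 1 := by
    simp only [Ah]
    rw [← map_mul, ← map_mul]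
    convert map_one dg
    refine funext fun k => ?_
    show tU _ * tU _ * tU _ = 1
    rw [← map_mul, ← map_mul]
    refine DD_ext fun v w => ?_
    rw [tU_tm]
    have e1 : A 0 k (A 1 k (A 2 k v)) = κ k • v := hprod k v
    have e2 : ((A 0 k)⁻¹ * (A 1 k)⁻¹ * (A 2 k)⁻¹) = (A 0 k * A 1 k * A 2 k)⁻¹ := by
      rw [mul_inv_rev, mul_inv_rev, ((hcomm 0 1 k).inv_inv).eq, 
        ((hcomm 1 2 k).inv_inv.mul_left (hcomm 0 2 k).inv_inv).eq]
    have e3 : ∀ w, κ k • (A 0 k * A 1 k * A 2 k)⁻¹ w = w := by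
      intro w
      rw [← hprod k]
      exact (A 0 k * A 1 k * A 2 k).apply_symm_apply w
    show tm H (A 0 k (A 1 k (A 2 k v))) (((A 0 k)⁻¹ * (A 1 k)⁻¹ * (A 2 k)⁻¹) w) = tm H v w
    rw [e1, e2, map_smul, smul_apply, ← map_smul, e3]
  -- conjugation form
  have hA1 : Ah 1 = (Ah 0)⁻¹ * (Ah 2)⁻¹ := by
    rw [eq_mul_inv_iff_mul_eq]
    exact eq_inv_of_mul_eq_one_right (by rw [← mul_assoc, hprodh])
  have hc2 : Ah 1 * Uh 2 * (Ah 1)⁻¹ = (Ah 0)⁻¹ * Uh 2 * Ah 0 := by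
    have : (Ah 2)⁻¹ * Uh 2 * Ah 2 = Uh 2 := by
      rw [mul_assoc, ← hcU 2, inv_mul_cancel_left]
    rw [hA1, mul_inv_rev, inv_inv, inv_inv]
    calc _ = (Ah 0)⁻¹ * ((Ah 2)⁻¹ * Uh 2 * Ah 2) * Ah 0 := by simp only [mul_assoc]
      _ = _ := by rw [this]
  have hc1 : Ah 1 * Uh 1 * (Ah 1)⁻¹ = Uh 1 := by rw [hcU, mul_inv_cancel_right]
  have hc0 : (Ah 0)⁻¹ * Uh 0 * Ah 0 = Uh 0 := by rw [mul_assoc, ← hcU, inv_mul_cancel_left]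
  let u : Fin 3 → _ := ![Uh 0, Uh 1, Ah 1 * Uh 2 * (Ah 1)⁻¹]
  have h01 : HeisRel p (u 0) (u 1) := hUh 0 1
  have h12 : HeisRel p (u 1) (u 2) := by
    have := (hUh 1 2).map (MulAut.conj (Ah 1)).toMonoidHom
    simp only [MulEquiv.toMonoidHom_eq_coe, MonoidHom.coe_coe, MulAut.conj_apply, hc1] at this
    exact this
  have h02 : HeisRel p (u 0) (u 2) := by
    have := (hUh 0 2).map (MulAut.conj (Ah 0)⁻¹).toMonoidHom
    simp only [MulEquiv.toMonoidHom_eq_coe, MonoidHom.coe_coe, MulAut.conj_apply, inv_inv, hc0,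
      ← hc2] at this
    exact this
  have h22 : HeisRel p (u 2) (u 2) := (hUh 2 2).map (MulAut.conj (Ah 1)).toMonoidHom
  have hu : ∀ i j, HeisRel p (u i) (u j) := by
    intro i j
    fin_cases i <;> fin_cases j
    · exact hUh 0 0
    · exact h01
    · exact h02
    · exact h01.symm
    · exact hUh 1 1
    · exact h12
    · exact h02.symm
    · exact h12.symm
    · exact h22
  let Ω : PiLp 2 (fun _ : ZMod p => DD H) := WithLp.toLp 2 (fun _ => tm H ω ω)
  have hΩ : ∀ k, Ω k = tm H ω ω := fun k => rfl
  have hUΩ : ∀ s, Uh s Ω = Ω := by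
    intro s
    ext k
    obtain ⟨k, rfl⟩ : ∃ k', k = k' + 1 := ⟨k - 1, by ring⟩
    simp only [Uh]
    rw [shU_apply, hΩ, tU_tm]
    simp only [hUω]
  have hAΩ : ∀ s, ‖Ah s Ω - Ω‖ ≤ p * (2 * δ) := by
    intro s
    refine norm_pi_le _ (by positivity) fun k => ?_
    have e : (Ah s Ω - Ω) k = tm H (A s k ω) ((A s k)⁻¹ ω) - tm H ω ω := by
      show tU _ (tm H ω ω) - tm H ω ω = _
      rw [tU_tm]
    rw [e]
    have e2 : tm H (A s k ω) ((A s k)⁻¹ ω) - tm H ω ω =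
        tm H (A s k ω - ω) ((A s k)⁻¹ ω) + tm H ω ((A s k)⁻¹ ω - ω) := by
      rw [map_sub, map_sub, sub_apply]; abel
    rw [e2]
    refine (norm_add_le _ _).trans ?_
    rw [norm_tm, norm_tm, hω, LinearIsometryEquiv.norm_map, hω]
    have e3 : ‖(A s k)⁻¹ ω - ω‖ ≤ δ := by
      rw [← LinearIsometryEquiv.norm_map (A s k), map_sub, norm_sub_rev]
      rw [show A s k ((A s k)⁻¹ ω) = ω from (A s k).apply_symm_apply ω]
      exact hδ s k
    have := hδ s k
    linarith
  have hAiΩ : ∀ s, ‖(Ah s)⁻¹ Ω - Ω‖ ≤ p * (2 * δ) := by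
    intro s
    rw [← LinearIsometryEquiv.norm_map (Ah s), map_sub, norm_sub_rev]
    rw [show Ah s ((Ah s)⁻¹ Ω) = Ω from (Ah s).apply_symm_apply Ω]
    exact hAΩ s
  have huΩ : ∀ i, ‖u i Ω - Ω‖ ≤ p * (4 * δ) := by
    intro i
    fin_cases i
    · show ‖Uh 0 Ω - Ω‖ ≤ _
      rw [hUΩ]; simp; positivity
    · show ‖Uh 1 Ω - Ω‖ ≤ _
      rw [hUΩ]; simp; positivity
    · show ‖Ah 1 (Uh 2 ((Ah 1)⁻¹ Ω)) - Ω‖ ≤ _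
      have e : Ah 1 (Uh 2 ((Ah 1)⁻¹ Ω)) - Ω =
          Ah 1 (Uh 2 ((Ah 1)⁻¹ Ω - Ω)) + (Ah 1 Ω - Ω) := by
        rw [map_sub, map_sub, hUΩ]; abel
      rw [e]
      refine (norm_add_le _ _).trans ?_
      rw [LinearIsometryEquiv.norm_map, LinearIsometryEquiv.norm_map]
      have := hAiΩ 1
      have := hAΩ 1
      linarith
  obtain ⟨η, hη, hηΩ⟩ := lemmaQ hp hp16 u hu Ω huΩ
  have hsmall : 3 * p * (p * (4 * δ)) + p * (2 * δ) ≤ 1 / 4 := by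
    have e : (p : ℝ) ^ 2 * δ = 1 / 1000 := by
      rw [hδdef]; field_simp
    nlinarith
  have hpos : 0 ≤ p * (2 * δ) := by positivity
  let x2 := η
  let x0 := (Ah 1)⁻¹ η
  let x1 := Ah 0 η
  have near : ∀ x : PiLp 2 (fun _ : ZMod p => DD H), ‖x - Ω‖ ≤ 1 / 4 → ∀ k,
      ‖x k - tm H ω ω‖ ≤ 1 / 4 := by
    intro x hx k
    have := PiLp.norm_apply_le (x - Ω) k
    exact this.trans hx
  have n2 := near x2 (by linarith)
  have n0 := near x0 (by
    have e : x0 - Ω = (Ah 1)⁻¹ (η - Ω) + ((Ah 1)⁻¹ Ω - Ω) := by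
      rw [map_sub]; simp [x0]
    rw [e]
    refine (norm_add_le _ _).trans ?_
    rw [LinearIsometryEquiv.norm_map]
    linarith [hAiΩ 1])
  have n1 := near x1 (by
    have e : x1 - Ω = (Ah 0) (η - Ω) + ((Ah 0) Ω - Ω) := by
      rw [map_sub]; simp [x1]
    rw [e]
    refine (norm_add_le _ _).trans ?_
    rw [LinearIsometryEquiv.norm_map]
    linarith [hAΩ 0])
  have conv : ∀ s (x : PiLp 2 (fun _ : ZMod p => DD H)), Uh s x = x →
      ∀ k, x (k + 1) = tU (U s, U s) (x k) := by
    intro s x hx k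
    conv_lhs => rw [← hx]
    simp only [Uh]
    rw [shU_apply]
  have ap : ∀ (S T : PiLp 2 (fun _ : ZMod p => DD H) ≃ₗᵢ[ℂ] PiLp 2 (fun _ : ZMod p => DD H)) x,
    (S * T) x = S (T x) := fun _ _ _ => rfl
  have i20 : Uh 0 x2 = x2 := hη 0
  have i21 : Uh 1 x2 = x2 := hη 1
  have hη2 : (Ah 1 * Uh 2 * (Ah 1)⁻¹) η = η := hη 2
  have i01 : Uh 1 x0 = x0 := by
    show Uh 1 ((Ah 1)⁻¹ η) = (Ah 1)⁻¹ η
    rw [← ap, show Uh 1 * (Ah 1)⁻¹ = (Ah 1)⁻¹ * Uh 1 by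
      rw [eq_inv_mul_iff_mul_eq, ← mul_assoc, hc1], ap]
    rw [show Uh 1 η = η from i21]
  have i02 : Uh 2 x0 = x0 := by
    show Uh 2 ((Ah 1)⁻¹ η) = (Ah 1)⁻¹ η
    conv_rhs => rw [← hη2]
    rw [← ap, ← ap]
    congr 1
    group
  have i10 : Uh 0 x1 = x1 := by
    show Uh 0 (Ah 0 η) = Ah 0 η
    rw [← ap, ← hcU, ap, show Uh 0 η = η from i20]
  have i12 : Uh 2 x1 = x1 := by
    show Uh 2 (Ah 0 η) = Ah 0 η
    rw [hc2] at hη2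
    conv_rhs => rw [← hη2]
    rw [← ap, ← ap]
    congr 1
    group
  obtain ⟨β0, hβ0, hb0⟩ := transfer hω (hUω 0) (hUA 0) (ξ := x2) (ξ' := x1) n1
    (conv 0 x2 i20) (conv 0 x1 i10) (fun k => rfl)
  obtain ⟨β1, hβ1, hb1⟩ := transfer hω (hUω 1) (hUA 1) (ξ := x0) (ξ' := x2) n2
    (conv 1 x0 i01) (conv 1 x2 i21) (fun k => by
      have : x2 = Ah 1 x0 := ((Ah 1).apply_symm_apply η).symm
      conv_lhs => rw [this]
      rfl)
  obtain ⟨β2, hβ2, hb2⟩ := transfer hω (hUω 2) (hUA 2) (ξ := x1) (ξ' := x0) n0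
    (conv 2 x1 i12) (conv 2 x0 i02) (fun k => by
      have : x0 = Ah 2 x1 := by
        show (Ah 1)⁻¹ η = Ah 2 (Ah 0 η)
        rw [← ap]
        congr 1
        rw [hA1]; group
      conv_lhs => rw [this]
      rfl)
  have hκ : ∀ k, κ k = β0 k * β1 k * β2 k := by
    intro k
    have e1 := hprod k (Pop (x1 k) ω)
    rw [hb2, map_smul, map_smul, hb1, map_smul, hb0, smul_smul, smul_smul] at e1
    have hne : Pop (x1 k) ω ≠ 0 := by
      intro h
      apply Pop_omega_ne hω (n1 k)
      rw [h, inner_zero_left]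
    have := smul_left_injective ℂ hne e1
    rw [← this]; ring
  rw [hκ, hκ, hβ0, hβ1, hβ2]

end Analytic

section Ops

/-- The group of measurable circle-valued functions. -/
def measM (Ω : Type*) [MeasurableSpace Ω] : Subgroup (Ω → Circle) where
  carrier := {φ | Measurable φ}
  one_mem' := measurable_const
  mul_mem' := fun h1 h2 => Measurable.mul h1 h2
  inv_mem' := fun h => Measurable.inv h

variable {Ω : Type*} [MeasurableSpace Ω] {μ : Measure Ω}

theorem measM_meas (φ : measM Ω) : Measurable φ.1 := φ.2

theorem measM_coe_measurable (φ : measM Ω) : Measurable (fun x => ((φ.1 x : Circle) : ℂ)) :=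
  have hc : Continuous (fun z : Circle => (z : ℂ)) := continuous_subtype_val
  hc.measurable.comp (measM_meas φ)

theorem mulF_memLp (φ : measM Ω) (f : Lp ℂ 2 μ) :
    MemLp (fun x => ((φ.1 x : Circle) : ℂ) * f x) 2 μ := by
  refine (Lp.memLp f).of_le
    ((measM_coe_measurable φ).aestronglyMeasurable.mul (Lp.aestronglyMeasurable f)) ?_
  refine Filter.Eventually.of_forall fun x => ?_
  rw [norm_mul, Circle.norm_coe, one_mul]

/-- Multiplication by a circle-valued function. -/
def mulF (φ : measM Ω) (f : Lp ℂ 2 μ) : Lp ℂ 2 μ := (mulF_memLp φ f).toLp _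

theorem mulF_coe (φ : measM Ω) (f : Lp ℂ 2 μ) :
    mulF φ f =ᵐ[μ] fun x => ((φ.1 x : Circle) : ℂ) * f x := MemLp.coeFn_toLp _

theorem mulF_congr {φ ψ : measM Ω} (h : φ.1 =ᵐ[μ] ψ.1) (f : Lp ℂ 2 μ) : mulF φ f = mulF ψ f := by
  apply Lp.ext
  filter_upwards [mulF_coe φ f, mulF_coe ψ f, h] with x h1 h2 h3
  rw [h1, h2, h3]

theorem mulF_one (f : Lp ℂ 2 μ) : mulF (1 : measM Ω) f = f := by
  apply Lp.ext
  filter_upwards [mulF_coe 1 f] with x h1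
  rw [h1]; simp

theorem mulF_mul (φ ψ : measM Ω) (f : Lp ℂ 2 μ) : mulF (φ * ψ) f = mulF φ (mulF ψ f) := by
  apply Lp.ext
  filter_upwards [mulF_coe (φ * ψ) f, mulF_coe φ (mulF ψ f), mulF_coe ψ f] with x h1 h2 h3
  rw [h1, h2, h3]; simp [mul_assoc]

theorem mulF_norm (φ : measM Ω) (f : Lp ℂ 2 μ) : ‖mulF φ f‖ = ‖f‖ := by
  rw [Lp.norm_def, Lp.norm_def]
  congr 1
  apply eLpNorm_congr_norm_ae
  filter_upwards [mulF_coe φ f] with x h1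
  rw [h1, norm_mul, Circle.norm_coe, one_mul]

/-- Multiplication operators as a homomorphism to the unitary group. -/
def mulU (μ : Measure Ω) : measM Ω →* (Lp ℂ 2 μ ≃ₗᵢ[ℂ] Lp ℂ 2 μ) where
  toFun φ :=
    { toFun := mulF φ
      invFun := mulF φ⁻¹
      map_add' := by
        intro f g
        apply Lp.ext
        filter_upwards [mulF_coe φ (f + g), mulF_coe φ f, mulF_coe φ g, Lp.coeFn_add f g,
          Lp.coeFn_add (mulF φ f) (mulF φ g)] with x h1 h2 h3 h4 h5
        rw [h1, h5, Pi.add_apply, h2, h3, h4, Pi.add_apply, mul_add]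
      map_smul' := by
        intro c f
        apply Lp.ext
        filter_upwards [mulF_coe φ (c • f), mulF_coe φ f, Lp.coeFn_smul c f,
          Lp.coeFn_smul c (mulF φ f)] with x h1 h2 h4 h5
        rw [h1, RingHom.id_apply, h5, Pi.smul_apply, h2, h4, Pi.smul_apply]
        simp only [smul_eq_mul]; ring
      left_inv := fun f => by rw [← mulF_mul, inv_mul_cancel, mulF_one]
      right_inv := fun f => by rw [← mulF_mul, mul_inv_cancel, mulF_one]
      norm_map' := mulF_norm φ }
  map_one' := by ext1 f; exact mulF_one f
  map_mul' := fun φ ψ => by ext1 f; exact mulF_mul φ ψ f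

@[simp] theorem mulU_apply (φ : measM Ω) (f : Lp ℂ 2 μ) : mulU μ φ f = mulF φ f := rfl

/-- A measure preserving group action. -/
structure MPAct {Γ : Type*} [Group Γ] (a : Γ → Ω → Ω) (μ : Measure Ω) : Prop where
  one : a 1 = id
  mul : ∀ g h, a (g * h) = a g ∘ a h
  mp : ∀ g, MeasurePreserving (a g) μ μ

variable {Γ : Type*} [Group Γ] {a : Γ → Ω → Ω}

/-- The Koopman representation. -/
def koop (ha : MPAct a μ) : Γ →* (Lp ℂ 2 μ ≃ₗᵢ[ℂ] Lp ℂ 2 μ) where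
  toFun g :=
    { toFun := fun f => Lp.compMeasurePreservingₗ ℂ (a g⁻¹) (ha.mp _) f
      invFun := fun f => Lp.compMeasurePreservingₗ ℂ (a g) (ha.mp _) f
      map_add' := map_add _
      map_smul' := map_smul _
      left_inv := fun f => by
        apply Lp.ext
        have e := (ha.mp g).quasiMeasurePreserving.ae_eq_comp
          (Lp.coeFn_compMeasurePreserving f (ha.mp g⁻¹))
        refine (Lp.coeFn_compMeasurePreserving _ (ha.mp g)).trans (e.trans ?_)
        rw [Function.comp_assoc, ← ha.mul, inv_mul_cancel, ha.one]; rfl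
      right_inv := fun f => by
        apply Lp.ext
        have e := (ha.mp g⁻¹).quasiMeasurePreserving.ae_eq_comp
          (Lp.coeFn_compMeasurePreserving f (ha.mp g))
        refine (Lp.coeFn_compMeasurePreserving _ (ha.mp g⁻¹)).trans (e.trans ?_)
        rw [Function.comp_assoc, ← ha.mul, mul_inv_cancel, ha.one]; rfl
      norm_map' := fun f => Lp.norm_compMeasurePreserving f (ha.mp g⁻¹) }
  map_one' := by
    ext1 f
    apply Lp.ext
    refine (Lp.coeFn_compMeasurePreserving _ (ha.mp 1⁻¹)).trans ?_
    rw [inv_one, ha.one]; rfl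
  map_mul' := fun g h => by
    ext1 f
    apply Lp.ext
    refine (Lp.coeFn_compMeasurePreserving _ (ha.mp (g * h)⁻¹)).trans ?_
    have e := (ha.mp g⁻¹).quasiMeasurePreserving.ae_eq_comp
          (Lp.coeFn_compMeasurePreserving f (ha.mp h⁻¹))
    refine Filter.EventuallyEq.symm
      ((Lp.coeFn_compMeasurePreserving _ (ha.mp g⁻¹)).trans (e.trans ?_))
    rw [Function.comp_assoc, ← ha.mul, mul_inv_rev]

theorem koop_coe (ha : MPAct a μ) (g : Γ) (f : Lp ℂ 2 μ) :
    koop ha g f =ᵐ[μ] fun x => f (a g⁻¹ x) := Lp.coeFn_compMeasurePreserving f (ha.mp g⁻¹)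

/-- The action on measurable functions. -/
def actM (ha : MPAct a μ) : Γ →* MulAut (measM Ω) where
  toFun g :=
    { toFun := fun φ => ⟨fun x => φ.1 (a g⁻¹ x), (measM_meas φ).comp (ha.mp g⁻¹).measurable⟩
      invFun := fun φ => ⟨fun x => φ.1 (a g x), (measM_meas φ).comp (ha.mp g).measurable⟩
      left_inv := fun φ => by
        apply Subtype.ext
        funext x
        show φ.1 ((a g⁻¹ ∘ a g) x) = _
        rw [← ha.mul, inv_mul_cancel, ha.one]; rfl
      right_inv := fun φ => by
        apply Subtype.ext
        funext x
        show φ.1 ((a g ∘ a g⁻¹) x) = _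
        rw [← ha.mul, mul_inv_cancel, ha.one]; rfl
      map_mul' := fun _ _ => rfl }
  map_one' := by
    ext1 φ
    apply Subtype.ext
    funext x
    show φ.1 (a 1⁻¹ x) = _
    rw [inv_one, ha.one]; rfl
  map_mul' := fun g h => by
    ext1 φ
    apply Subtype.ext
    funext x
    show φ.1 (a (g * h)⁻¹ x) = φ.1 ((a h⁻¹ ∘ a g⁻¹) x)
    rw [← ha.mul, mul_inv_rev]

theorem actM_apply (ha : MPAct a μ) (g : Γ) (φ : measM Ω) (x : Ω) :
    (actM ha g φ).1 x = φ.1 (a g⁻¹ x) := rfl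

theorem koop_mulU (ha : MPAct a μ) (g : Γ) (φ : measM Ω) :
    koop ha g * mulU μ φ = mulU μ (actM ha g φ) * koop ha g := by
  ext1 f
  apply Lp.ext
  show koop ha g (mulF φ f) =ᵐ[μ] mulF (actM ha g φ) (koop ha g f)
  have e := (ha.mp g⁻¹).quasiMeasurePreserving.ae_eq_comp (mulF_coe φ f)
  filter_upwards [koop_coe ha g (mulF φ f), mulF_coe (actM ha g φ) (koop ha g f),
    koop_coe ha g f, e] with x h1 h2 h3 h4
  rw [h1, h2, h3, actM_apply]
  exact h4

/-- The subgroup of a.e. constant functions. -/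
def constM (μ : Measure Ω) : Subgroup (measM Ω) where
  carrier := {φ | ∃ ζ : Circle, ∀ᵐ x ∂μ, φ.1 x = ζ}
  one_mem' := ⟨1, Filter.Eventually.of_forall fun _ => rfl⟩
  mul_mem' := by
    rintro φ ψ ⟨z, hz⟩ ⟨w, hw⟩
    refine ⟨z * w, ?_⟩
    filter_upwards [hz, hw] with x h1 h2
    show φ.1 x * ψ.1 x = _
    rw [h1, h2]
  inv_mem' := by
    rintro φ ⟨z, hz⟩
    refine ⟨z⁻¹, ?_⟩
    filter_upwards [hz] with x h1
    show (φ.1 x)⁻¹ = _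
    rw [h1]

theorem mk_constM_eq {φ ψ : measM Ω} :
    QuotientGroup.mk' (constM μ) φ = QuotientGroup.mk' (constM μ) ψ ↔
      ∃ ζ : Circle, ∀ᵐ x ∂μ, φ.1 x = ζ * ψ.1 x := by
  rw [eq_comm, QuotientGroup.mk'_apply, QuotientGroup.mk'_apply, QuotientGroup.eq]
  constructor
  · rintro ⟨z, hz⟩
    refine ⟨z, ?_⟩
    filter_upwards [hz] with x h1
    rw [← h1]
    show _ = (ψ.1 x)⁻¹ * φ.1 x * ψ.1 x
    rw [mul_right_comm, inv_mul_cancel, one_mul]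
  · rintro ⟨z, hz⟩
    refine ⟨z, ?_⟩
    filter_upwards [hz] with x h1
    show (ψ.1 x)⁻¹ * φ.1 x = z
    rw [h1, mul_comm z, inv_mul_cancel_left]

end Ops

section BernM
set_option linter.unusedSectionVars false

theorem bern_eq_infinitePi {ι X₀ : Type*} [MeasurableSpace X₀] {ν : Measure X₀}
    [IsProbabilityMeasure ν] {μ : Measure (ι → X₀)} (h : IsBernoulliMeasure ν μ) :
    μ = Measure.infinitePi (fun _ => ν) := by
  apply Measure.eq_infinitePi
  intro s t ht
  exact h s t ht

variable {Γ : Type*} [Group Γ] {ν : Measure Circle} {μ : Measure (Γ → Circle)}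

theorem measurable_bern (g : Γ) : Measurable (bernoulliShift Γ Circle g) :=
  measurable_pi_lambda _ fun h => measurable_pi_apply (g⁻¹ * h)

theorem bern_mp [IsProbabilityMeasure ν] (h : IsBernoulliMeasure ν μ) (g : Γ) :
    MeasurePreserving (bernoulliShift Γ Circle g) μ μ := by
  classical
  refine ⟨measurable_bern g, ?_⟩
  have h2 : IsBernoulliMeasure ν (μ.map (bernoulliShift Γ Circle g)) := by
    intro s t ht
    rw [Measure.map_apply (measurable_bern g)]
    · have : bernoulliShift Γ Circle g ⁻¹' {x | ∀ i ∈ s, x i ∈ t i} =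
          {x | ∀ j ∈ s.image (fun i => g⁻¹ * i), x j ∈ t (g * j)} := by
        ext x
        simp only [Set.mem_preimage, Set.mem_ofPred_eq, Finset.forall_mem_image,
          mul_inv_cancel_left]
        rfl
      rw [this, h _ (fun j => t (g * j)) (fun i => ht _), Finset.prod_image]
      · simp
      · intro i _ j _ hij
        exact mul_left_cancel hij
    · have : {x : Γ → Circle | ∀ i ∈ s, x i ∈ t i} = Set.pi s t := rfl
      rw [this]
      exact MeasurableSet.pi s.countable_toSet fun i _ => ht i
  rw [bern_eq_infinitePi h2, ← bern_eq_infinitePi h]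

theorem bern_act [IsProbabilityMeasure ν] (h : IsBernoulliMeasure ν μ) :
    MPAct (bernoulliShift Γ Circle) μ where
  one := by funext x k; show x (1⁻¹ * k) = x k; simp
  mul := fun g k => by
    funext x l; show x ((g * k)⁻¹ * l) = x (k⁻¹ * (g⁻¹ * l)); rw [mul_inv_rev, mul_assoc]
  mp := bern_mp h

theorem measurable_trans (y : Γ → Circle) : Measurable (fun x : Γ → Circle => x * y) := by
  refine measurable_pi_lambda _ fun k => ?_
  exact (measurable_pi_apply k : Measurable fun x : Γ → Circle => x k).mul_const (y k)

theorem trans_mp [IsProbabilityMeasure ν] [ν.IsHaarMeasure] (h : IsBernoulliMeasure ν μ)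
    (y : Γ → Circle) : MeasurePreserving (fun x => x * y) μ μ := by
  have hm : Measurable (fun x : Γ → Circle => x * y) :=
    measurable_trans y
  refine ⟨hm, ?_⟩
  have h2 : IsBernoulliMeasure ν (μ.map (fun x => x * y)) := by
    intro s t ht
    rw [Measure.map_apply hm]
    · have : (fun x => x * y) ⁻¹' {x | ∀ i ∈ s, x i ∈ t i} =
          {x | ∀ j ∈ s, x j ∈ (fun z => z * y j) ⁻¹' t j} := rfl
      rw [this, h _ (fun j => (fun z => z * y j) ⁻¹' t j)
        (fun i => (measurable_mul_const (y i)) (ht i))]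
      refine Finset.prod_congr rfl fun i _ => ?_
      exact measure_preimage_mul_right ν (y i) (t i)
    · have : {x : Γ → Circle | ∀ i ∈ s, x i ∈ t i} = Set.pi s t := rfl
      rw [this]
      exact MeasurableSet.pi s.countable_toSet fun i _ => ht i
  rw [bern_eq_infinitePi h2, ← bern_eq_infinitePi h]

/-- Translation of functions. -/
def tauM (y : Γ → Circle) (φ : measM (Γ → Circle)) : measM (Γ → Circle) :=
  ⟨fun x => φ.1 (x * y), (measM_meas φ).comp
    (measurable_trans y)⟩

theorem tauM_apply (y : Γ → Circle) (φ : measM (Γ → Circle)) (x : Γ → Circle) :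
    (tauM y φ).1 x = φ.1 (x * y) := rfl

/-- The embedding of the integral group ring into the characters. -/
def chi : finS Γ →+ Additive (measM (Γ → Circle)) where
  toFun f := Additive.ofMul ⟨fun x => ∏ᶠ h, x h ^ f.1 h, by
    have hf : (Function.support f.1).Finite := f.2
    have : (fun x : Γ → Circle => ∏ᶠ h, x h ^ f.1 h) =
        fun x => ∏ h ∈ hf.toFinset, x h ^ f.1 h := by
      funext x
      apply finprod_eq_prod_of_mulSupport_subset
      intro h hh
      simp only [Function.mem_mulSupport] at hh
      simp only [Set.Finite.coe_toFinset, Function.mem_support]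
      intro h0
      exact hh (by rw [h0, zpow_zero])
    show Measurable _
    rw [this]
    exact Finset.measurable_prod _ fun h _ => (measurable_pi_apply h).pow_const _⟩
  map_zero' := by
    apply Additive.toMul.injective
    apply Subtype.ext
    funext x
    show ∏ᶠ h, x h ^ (0 : ℤ) = 1
    simp
  map_add' := fun f g => by
    apply Additive.toMul.injective
    apply Subtype.ext
    funext x
    show ∏ᶠ h, x h ^ (f.1 h + g.1 h) = (∏ᶠ h, x h ^ f.1 h) * ∏ᶠ h, x h ^ g.1 h
    have key : ∀ f : finS Γ, (Function.mulSupport fun h => x h ^ f.1 h).Finite := by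
      intro f
      refine Set.Finite.subset (show (Function.support f.1).Finite from f.2) ?_
      intro h hh h0
      exact hh (by show x h ^ f.1 h = 1; rw [h0, zpow_zero])
    rw [← finprod_mul_distrib (key f) (key g)]
    simp only [zpow_add]

theorem chi_apply (f : finS Γ) (x : Γ → Circle) : (chi f).toMul.1 x = ∏ᶠ h, x h ^ f.1 h := rfl

theorem chi_del1 (x : Γ → Circle) :
    (chi ⟨del1 Γ, del1_mem Γ⟩).toMul.1 x = x 1 := by
  classical
  rw [chi_apply, finprod_eq_single _ 1]
  · simp [del1]
  · intro h hh
    simp [del1, hh]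

theorem chi_equi [IsProbabilityMeasure ν] (h : IsBernoulliMeasure ν μ) (g : Γ) (f : finS Γ) :
    (chi ⟨trN Γ g f.1, trN_mem g f.2⟩).toMul = actM (bern_act h) g (chi f).toMul := by
  apply Subtype.ext
  funext x
  rw [actM_apply, chi_apply, chi_apply]
  rw [← finprod_comp_equiv (Equiv.mulLeft g)]
  apply finprod_congr
  intro k
  show x (g * k) ^ (trN Γ g f.1 (g * k)) = x (g⁻¹⁻¹ * k) ^ f.1 k
  rw [trN_apply, inv_mul_cancel_left, inv_inv]

theorem act_tau [IsProbabilityMeasure ν] (h : IsBernoulliMeasure ν μ) (g : Γ)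
    (y : Γ → Circle) (φ : measM (Γ → Circle)) :
    actM (bern_act h) g (tauM y φ) =
      tauM (bernoulliShift Γ Circle g y) (actM (bern_act h) g φ) := by
  apply Subtype.ext
  funext x
  rw [actM_apply, tauM_apply, tauM_apply, actM_apply]
  refine congrArg φ.1 ?_
  funext k
  show x (g⁻¹⁻¹ * k) * y k = x (g⁻¹⁻¹ * k) * y (g⁻¹ * (g⁻¹⁻¹ * k))
  rw [mul_inv_cancel_left]

/-- The constant function one in `L²`. -/
def omg (μ : Measure (Γ → Circle)) [IsProbabilityMeasure μ] : Lp ℂ 2 μ :=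
  (memLp_const (1 : ℂ)).toLp (fun _ => 1)

theorem omg_coe [IsProbabilityMeasure μ] : omg μ =ᵐ[μ] fun _ => (1 : ℂ) := MemLp.coeFn_toLp _

theorem omg_norm [IsProbabilityMeasure μ] : ‖omg μ‖ = 1 := by
  rw [omg, Lp.norm_toLp, eLpNorm_const _ (by norm_num) (IsProbabilityMeasure.ne_zero μ)]
  simp

theorem comp_omg [IsProbabilityMeasure μ] {T : (Γ → Circle) → (Γ → Circle)}
    (hT : MeasurePreserving T μ μ) : Lp.compMeasurePreserving T hT (omg μ) = omg μ := by
  apply Lp.ext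
  refine (Lp.coeFn_compMeasurePreserving _ hT).trans ?_
  exact (hT.quasiMeasurePreserving.ae_eq_comp omg_coe).trans omg_coe.symm

theorem small [Countable Γ] [IsProbabilityMeasure ν] [ν.IsHaarMeasure] [IsProbabilityMeasure μ]
    (h : IsBernoulliMeasure ν μ) (y : ℝ → Γ → Circle) (hy : Continuous y) (hy0 : y 0 = 1)
    (φ : measM (Γ → Circle)) :
    Filter.Tendsto (fun ε => ‖mulF (tauM (y ε) φ * φ⁻¹) (omg μ) - omg μ‖) (nhds 0) (nhds 0) := by
  let F : Lp ℂ 2 μ := mulF φ (omg μ)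
  have h1 : ∀ ε, mulF (tauM (y ε) φ) (omg μ) =
      Lp.compMeasurePreserving (fun x => x * y ε) (trans_mp h (y ε)) F := by
    intro ε
    apply Lp.ext
    have e := (trans_mp h (y ε)).quasiMeasurePreserving.ae_eq_comp (mulF_coe φ (omg μ))
    have e2 := (trans_mp h (y ε)).quasiMeasurePreserving.ae_eq_comp (omg_coe (μ := μ))
    filter_upwards [mulF_coe (tauM (y ε) φ) (omg μ), omg_coe (μ := μ),
      Lp.coeFn_compMeasurePreserving F (trans_mp h (y ε)), e, e2] with x h1 h2 h3 h4 h5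
    rw [h1, h3, h2, h4]
    simp only [Function.comp_apply] at h5 ⊢
    rw [h5, tauM_apply]
  have h2 : ∀ ε, ‖mulF (tauM (y ε) φ * φ⁻¹) (omg μ) - omg μ‖ =
      ‖Lp.compMeasurePreserving (fun x => x * y ε) (trans_mp h (y ε)) F - F‖ := by
    intro ε
    rw [← h1]
    rw [← (mulU μ φ).norm_map (mulF (tauM (y ε) φ * φ⁻¹) (omg μ) - omg μ), map_sub, mulU_apply,
      mulU_apply, ← mulF_mul, mul_comm φ, inv_mul_cancel_right]
  simp only [h2]
  let gg : ℝ → C(Γ → Circle, Γ → Circle) := fun ε => ⟨fun x => x * y ε, by fun_prop⟩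
  have hgg : Continuous gg := by
    apply ContinuousMap.continuous_of_continuous_uncurry
    show Continuous fun q : ℝ × (Γ → Circle) => q.2 * y q.1
    exact continuous_snd.mul (hy.comp continuous_fst)
  have key := (continuous_const (y := F)).compMeasurePreservingLp hgg
    (fun ε => trans_mp h (y ε)) (by norm_num : (2 : ENNReal) ≠ ⊤)
  have := ((key.sub continuous_const).norm (E := Lp ℂ 2 μ) (f := fun ε => Lp.compMeasurePreserving (gg ε) (trans_mp h (y ε)) F - F)).tendsto 0
  have z : Lp.compMeasurePreserving (gg 0) (trans_mp h (y 0)) F - F = 0 := by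
    rw [sub_eq_zero]
    apply Lp.ext
    refine (Lp.coeFn_compMeasurePreserving F (trans_mp h (y 0))).trans ?_
    rw [hy0]
    filter_upwards with x
    simp
  rw [z, norm_zero] at this
  exact this

end BernM

section MainArg

/-- The degree homomorphism. -/
def degH (p : ℕ) : Grp p →* Multiplicative (ZMod p) :=
  grpLift (fun _ => Multiplicative.ofAdd 1) (fun i j => by
    have : (Multiplicative.ofAdd (1 : ZMod p)) ^ p = 1 := by rw [← ofAdd_nsmul]; simp
    exact ⟨this, this, mul_comm _ _, mul_comm _ _⟩)

theorem degH_gen (p : ℕ) (i : Fin 3) : degH p (gen p i) = Multiplicative.ofAdd 1 := by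
  simp [degH]

open Classical in
/-- The level translations. -/
def lev (p : ℕ) (k : ZMod p) (ε : ℝ) : Grp p → Circle :=
  fun g => if degH p g = Multiplicative.ofAdd k then Circle.exp ε else 1

theorem lev_zero (p : ℕ) (k : ZMod p) : lev p k 0 = 1 := by
  funext g
  simp [lev]

theorem lev_cont (p : ℕ) (k : ZMod p) : Continuous (lev p k) := by
  refine continuous_pi fun g => ?_
  unfold lev
  split_ifs
  · exact Circle.exp.continuous
  · exact continuous_const

theorem lev_shift (p : ℕ) (k : ZMod p) (ε : ℝ) (i : Fin 3) :
    bernoulliShift (Grp p) Circle (gen p i) (lev p k ε) = lev p (k + 1) ε := by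
  funext g
  show lev p k ε ((gen p i)⁻¹ * g) = _
  unfold lev
  rw [map_mul, map_inv, degH_gen]
  have : ((Multiplicative.ofAdd (1 : ZMod p))⁻¹ * degH p g = Multiplicative.ofAdd k) ↔
      (degH p g = Multiplicative.ofAdd (k + 1)) := by
    rw [inv_mul_eq_iff_eq_mul, ← ofAdd_add, add_comm]
  simp only [this]

theorem no_split {p : ℕ} [Fact p.Prime] (hp16 : 16 ≤ p)
    {ν : Measure Circle} [IsProbabilityMeasure ν] [ν.IsHaarMeasure]
    {μ : Measure (Grp p → Circle)} [IsProbabilityMeasure μ] (hB : IsBernoulliMeasure ν μ)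
    (K : ℕ) (hK : 0 < K) (f : Fin 3 → measM (Grp p → Circle))
    (hf : ∀ i, ∃ ζ : Circle, ∀ᵐ x ∂μ, (actM (bern_act hB) (gen p i) (f i)).1 x = ζ * (f i).1 x)
    (hprod : f 0 * f 1 * f 2 = (chi ⟨del1 _, del1_mem _⟩).toMul ^ K) : False := by
  have hp : p.Prime := Fact.out
  have : NeZero p := ⟨hp.ne_zero⟩
  have hpos : (0 : ℝ) < 1 / (1000 * p ^ 2) := by
    have : (0 : ℝ) < p := by exact_mod_cast hp.pos
    positivity
  have hev : ∀ᶠ ε in nhds (0 : ℝ), ∀ s k,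
      ‖mulF (tauM (lev p k ε) (f s) * (f s)⁻¹) (omg μ) - omg μ‖ < 1 / (1000 * p ^ 2) := by
    rw [Filter.eventually_all]
    intro s
    rw [Filter.eventually_all]
    intro k
    exact (small hB (lev p k) (lev_cont p k) (lev_zero p k) (f s)).eventually (gt_mem_nhds hpos)
  have hev2 : ∀ᶠ ε in nhds (0 : ℝ), ε * (K : ℝ) < 1 := by
    have : Continuous fun ε : ℝ => ε * K := by fun_prop
    have := this.tendsto 0
    rw [zero_mul] at this
    exact this.eventually (gt_mem_nhds one_pos)
  obtain ⟨ε, ⟨hε1, hε2⟩, hε0⟩ :=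
    (((hev.and hev2).filter_mono nhdsWithin_le_nhds).and
      (self_mem_nhdsWithin : Set.Ioi (0 : ℝ) ∈ nhdsWithin 0 (Set.Ioi 0))).exists
  have hε0 : 0 < ε := hε0
  let D : Fin 3 → ZMod p → measM (Grp p → Circle) := fun s k => tauM (lev p k ε) (f s) * (f s)⁻¹
  have hres := analytic hp hp16 (fun s => koop (bern_act hB) (gen p s))
    (fun i j => (gen_heis p i j).map (koop (bern_act hB))) (ω := omg μ) omg_norm
    (fun i => comp_omg (bern_mp hB _)) (fun s k => mulU μ (D s k))
    (fun s t k => by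
      show _ * _ = _ * _
      rw [← map_mul, ← map_mul, mul_comm])
    (fun s k => by
      rw [koop_mulU]
      congr 1
      ext1 v
      apply mulF_congr
      obtain ⟨z, hz⟩ := hf s
      filter_upwards [hz, (trans_mp hB (lev p (k + 1) ε)).quasiMeasurePreserving.ae hz]
        with x h1 h2
      have e : actM (bern_act hB) (gen p s) (D s k) = tauM (lev p (k + 1) ε)
          (actM (bern_act hB) (gen p s) (f s)) * (actM (bern_act hB) (gen p s) (f s))⁻¹ := by
        show actM (bern_act hB) (gen p s) (_ * _) = _
        rw [map_mul, map_inv, act_tau hB, lev_shift]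
      rw [e]
      show (actM (bern_act hB) (gen p s) (f s)).1 (x * lev p (k + 1) ε) *
        ((actM (bern_act hB) (gen p s) (f s)).1 x)⁻¹ =
        (f s).1 (x * lev p (k + 1) ε) * ((f s).1 x)⁻¹
      rw [h1, h2, mul_inv, mul_mul_mul_comm, mul_inv_cancel, one_mul])
    (fun k => ((lev p k ε 1 ^ K : Circle) : ℂ))
    (fun k v => by
      rw [mulU_apply, mulU_apply, mulU_apply, ← mulF_mul, ← mulF_mul, mul_assoc]
      have e : ∀ x, (D 0 k * (D 1 k * D 2 k)).1 x = lev p k ε 1 ^ K := by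
        intro x
        have h1 : ∀ x, (f 0).1 x * (f 1).1 x * (f 2).1 x = x 1 ^ K := by
          intro x
          have := congrArg (fun φ : measM (Grp p → Circle) => φ.1 x) hprod
          have h3 : ((chi (Γ := Grp p) ⟨del1 _, del1_mem _⟩).toMul ^ K).1 x
            = ((chi (Γ := Grp p) ⟨del1 _, del1_mem _⟩).toMul.1 x) ^ K := rfl
          rw [chi_del1] at h3
          exact this.trans h3
        have h2 : (D 0 k * (D 1 k * D 2 k)).1 x =
            ((f 0).1 (x * lev p k ε) * ((f 0).1 x)⁻¹) * (((f 1).1 (x * lev p k ε) * ((f 1).1 x)⁻¹) *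
            ((f 2).1 (x * lev p k ε) * ((f 2).1 x)⁻¹)) := rfl
        have h3 : (D 0 k * (D 1 k * D 2 k)).1 x =
            ((f 0).1 (x * lev p k ε) * (f 1).1 (x * lev p k ε) * (f 2).1 (x * lev p k ε)) *
            ((f 0).1 x * (f 1).1 x * (f 2).1 x)⁻¹ := by
          rw [h2, mul_inv, mul_inv]
          simp only [mul_assoc, mul_comm, mul_left_comm]
        rw [h3, h1, h1, Pi.mul_apply, mul_pow, mul_comm, inv_mul_cancel_left]
      apply Lp.ext
      filter_upwards [mulF_coe (D 0 k * (D 1 k * D 2 k)) v,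
        Lp.coeFn_smul ((lev p k ε 1 ^ K : Circle) : ℂ) v] with x h1 h2
      rw [h1, h2, e, Pi.smul_apply, smul_eq_mul])
    (fun s k => (hε1 s k).le) 0
  have h1 : lev p 0 ε 1 = Circle.exp ε := by simp [lev]
  have h2 : lev p (0 + 1) ε 1 = 1 := by
    have : (0 : ZMod p) ≠ 1 := by
      have : Fact (1 < p) := ⟨hp.one_lt⟩
      exact zero_ne_one
    unfold lev
    rw [if_neg]
    rw [map_one, zero_add]
    intro h
    exact this (Multiplicative.ofAdd.injective h)
  simp only [h1, h2, one_pow] at hres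
  have h4 : Circle.exp ε ^ K = 1 := (Circle.coe_injective hres).symm
  have h5 : Circle.exp (K * ε) = 1 := by
    rw [← h4]
    rw [← nsmul_eq_mul]
    exact map_nsmul Circle.expHom K ε
  rw [Circle.exp_eq_one] at h5
  obtain ⟨m, hm⟩ := h5
  have hKp : (0 : ℝ) < K := by exact_mod_cast hK
  have hm0 : (0 : ℝ) < m * (2 * Real.pi) := by rw [← hm]; positivity
  have hm1 : (m : ℝ) * (2 * Real.pi) < 1 := by rw [← hm]; linarith
  have hpi := Real.pi_gt_three
  have hm2 : (0 : ℝ) < m := by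
    by_contra hc
    push Not at hc
    nlinarith
  have hm3 : (1 : ℝ) ≤ m := by exact_mod_cast (by exact_mod_cast hm2 : (0 : ℤ) < m)
  nlinarith

theorem main_arg {p : ℕ} [Fact p.Prime] (hp16 : 16 ≤ p)
    (ν : Measure Circle) [IsProbabilityMeasure ν] [ν.IsHaarMeasure]
    (μ : Measure (Grp p → Circle)) [IsProbabilityMeasure μ] (hB : IsBernoulliMeasure ν μ) :
    ∃ c : Grp p → Grp p → (Grp p → Circle) → Circle,
        c ∈ measZ2 (bernoulliShift (Grp p) Circle) μ ∧
        c ∉ measBPsi2 (bernoulliShift (Grp p) Circle) μ := by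
  obtain ⟨ℓ, q, h1, h2, h3⟩ := exists_zg_data (p := p)
  let m : Grp p → Grp p → finS (Grp p) := fun g h => ⟨_, h2 g h⟩
  refine ⟨fun g h => (chi (m g h)).toMul.1, ⟨fun g h => (chi (m g h)).toMul.2, ?_⟩, ?_⟩
  · intro g₁ g₂ g₃
    refine Filter.Eventually.of_forall fun x => ?_
    have e : (⟨trN _ g₁ (m g₂ g₃).1, trN_mem g₁ (m g₂ g₃).2⟩ : finS (Grp p)) - m (g₁ * g₂) g₃ +
        m g₁ (g₂ * g₃) - m g₁ g₂ = 0 := by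
      apply Subtype.ext
      show trN _ g₁ (ℓ g₂ + trN _ g₂ (ℓ g₃) - ℓ (g₂ * g₃)) -
        (ℓ (g₁ * g₂) + trN _ (g₁ * g₂) (ℓ g₃) - ℓ (g₁ * g₂ * g₃)) +
        (ℓ g₁ + trN _ g₁ (ℓ (g₂ * g₃)) - ℓ (g₁ * (g₂ * g₃))) -
        (ℓ g₁ + trN _ g₁ (ℓ g₂) - ℓ (g₁ * g₂)) = 0
      rw [map_sub, map_add, trN_mul, mul_assoc]
      try simp only [AddMonoidHom.comp_apply]
      abel
    have e2 := congrArg (fun t => (chi t).toMul.1 x) e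
    have e3 := congrArg (fun φ : measM (Grp p → Circle) => φ.1 x) (chi_equi hB g₁ (m g₂ g₃))
    simp only [map_sub, map_add, map_zero] at e2
    rw [sub_eq_add_neg, sub_eq_add_neg] at e2
    refine Eq.trans ?_ e2
    show _ = (chi (⟨trN _ g₁ (m g₂ g₃).1, trN_mem g₁ (m g₂ g₃).2⟩ : finS (Grp p))).toMul.1 x *
      ((chi (m (g₁ * g₂) g₃)).toMul.1 x)⁻¹ * (chi (m g₁ (g₂ * g₃))).toMul.1 x *
      ((chi (m g₁ g₂)).toMul.1 x)⁻¹
    rw [show (chi (⟨trN _ g₁ (m g₂ g₃).1, trN_mem g₁ (m g₂ g₃).2⟩ : finS (Grp p))).toMul.1 x =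
      (actM (bern_act hB) g₁ (chi (m g₂ g₃)).toMul).1 x from e3, actM_apply]
  · rintro ⟨θ, b, hθ, hb, hc⟩
    obtain ⟨K, f, hK, hf, hprod⟩ := reduction (actM (bern_act hB)) (QuotientGroup.mk' (constM μ))
      chi (chi_equi hB) ℓ q h1 h2 h3 (fun g => ⟨b g, hb g⟩) (fun g h => by
        rw [mk_constM_eq]
        refine ⟨θ g h, ?_⟩
        filter_upwards [hc g h] with x hx
        refine hx.trans ?_
        show _ = θ g h * (b g x * b h (bernoulliShift (Grp p) Circle g⁻¹ x) * (b (g * h) x)⁻¹)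
        congr 1
        simp only [mul_comm, mul_left_comm])
    exact no_split hp16 hB K hK f (fun i => mk_constM_eq.1 (hf i)) hprod

theorem final_goal :
    ∃ (G : Type) (_ : Group G), Countable G ∧ Infinite G ∧ HasPropertyT G ∧
      ∀ (ν : Measure Circle), IsProbabilityMeasure ν → ν.IsHaarMeasure →
      ∀ (μ : Measure (G → Circle)), IsProbabilityMeasure μ → IsBernoulliMeasure ν μ →
      ∃ c : G → G → (G → Circle) → Circle,
        c ∈ measZ2 (bernoulliShift G Circle) μ ∧
        c ∉ measBPsi2 (bernoulliShift G Circle) μ := by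
  have : Fact (Nat.Prime 17) := ⟨by norm_num⟩
  refine ⟨Grp 17, inferInstance, inferInstance, grp_infinite,
    grp_propertyT (by norm_num) (by norm_num), ?_⟩
  intro ν h1 h2 μ h3 hB
  exact main_arg (by norm_num) ν μ hB

end MainArg

/-- There exists a countable infinite discrete group `G` with
Kazhdan's property (T) such that for the Bernoulli shift `G ↷ (𝕋^G, ν^G)` (`ν` the
Haar probability measure on `𝕋`) the natural map `Ψ₂ : H²(G, 𝕋) → H²(G ↷ 𝕋^G; 𝕋)` is
not surjective: there is a measurable 2-cocycle which is not cohomologous to any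
measurable 2-cocycle that is constant in the space variable. -/
theorem exists_propertyT_group_with_h2_larger_than_psi2_image :
    ∃ (G : Type) (_ : Group G), Countable G ∧ Infinite G ∧ HasPropertyT G ∧
      ∀ (ν : Measure Circle), IsProbabilityMeasure ν → ν.IsHaarMeasure →
      ∀ (μ : Measure (G → Circle)), IsProbabilityMeasure μ → IsBernoulliMeasure ν μ →
      ∃ c : G → G → (G → Circle) → Circle,
        c ∈ measZ2 (bernoulliShift G Circle) μ ∧
        c ∉ measBPsi2 (bernoulliShift G Circle) μ := by
  exact final_goal

end AlgActCohomology
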